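/- arXiv:1112.5134 — 4 statements merged into one kernel-verified Lean document; each statement's English description precedes it below -/
import Mathlib

section
/- (Riemann–Roch for graphs with loops) Let G be a connected graph of genus g = |E(G)| − |V(G)| + 1, possibly with loops, and let K#_G := Σ_{v∈V(G)} (val(v) − 2) v. Then for every D ∈ Div(G): r#_G(D) − r#_G(K#_G − D) = deg D − g + 1. -/
/-- A finite multigraph: vertices `V`, edges `E`, each edge has an (arbitrarily
ordered) pair of endpoints.  Loops are edges whose two endpoints coincide. -/
structure Multigraph where
  V : Type
  E : Type
  [decV : DecidableEq V]
  [fintV : Fintype V]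
  [decE : DecidableEq E]
  [fintE : Fintype E]
  ends : E → V × V

attribute [instance] Multigraph.decV Multigraph.fintV Multigraph.decE Multigraph.fintE

namespace Multigraph

variable (G : Multigraph)

/-- Two vertices are adjacent if some edge joins them. -/
def Adj (v w : G.V) : Prop := ∃ e : G.E, G.ends e = (v, w) ∨ G.ends e = (w, v)

/-- A multigraph is connected if it is nonempty and any two vertices are joined by a walk. -/
def Connected : Prop := Nonempty G.V ∧ ∀ v w : G.V, Relation.ReflTransGen G.Adj v w

/-- The number of edges joining `v` and `w`. -/
def numEdges (v w : G.V) : ℕ :=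
  (Finset.univ.filter fun e : G.E => G.ends e = (v, w) ∨ G.ends e = (w, v)).card

/-- The number of loops based at `v`. -/
def numLoops (v : G.V) : ℕ :=
  (Finset.univ.filter fun e : G.E => G.ends e = (v, v)).card

/-- The valency of `v` (loops count twice). -/
def valency (v : G.V) : ℕ :=
  ∑ e : G.E, ((if (G.ends e).1 = v then 1 else 0) + (if (G.ends e).2 = v then 1 else 0))

/-- The intersection product on vertices: `(v·w)` is the number of edges joining `v` and
`w` when `v ≠ w`, and `(v·v) = -val(v) + 2 loop(v)`. -/
def inter (v w : G.V) : ℤ :=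
  if v = w then -(G.valency v : ℤ) + 2 * (G.numLoops v : ℤ) else (G.numEdges v w : ℤ)

/-- The principal divisor `T_v = Σ_w (v·w) w`. -/
def T (v : G.V) : G.V → ℤ := fun w => G.inter v w

/-- The group of principal divisors, generated by the `T_v`. -/
def Prin : AddSubgroup (G.V → ℤ) := AddSubgroup.closure (Set.range G.T)

/-- The Jacobian group `Div(G)/Prin(G)`. -/
abbrev Jac := (G.V → ℤ) ⧸ G.Prin

/-- A divisor is effective if all its coefficients are nonnegative. -/
def Effective {α : Type} (D : α → ℤ) : Prop := ∀ v, 0 ≤ D v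

/-- The degree of a divisor. -/
def degree {α : Type} [Fintype α] (D : α → ℤ) : ℤ := ∑ v, D v

/-- The Baker–Norine rank of a divisor: `-1` if no effective divisor is linearly
equivalent to `D`, and otherwise the largest `k ≥ 0` such that for every effective
divisor `E` of degree `k` some effective divisor is linearly equivalent to `D - E`. -/
noncomputable def rank (D : G.V → ℤ) : ℤ :=
  sSup {r : ℤ | r = -1 ∨ (0 ≤ r ∧ ∀ E : G.V → ℤ, Effective E → degree E = r →
      ∃ F : G.V → ℤ, Effective F ∧ D - E - F ∈ G.Prin)}

/-- An edge is a loop if its two endpoints coincide. -/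
def IsLoop (e : G.E) : Prop := (G.ends e).1 = (G.ends e).2

/-- The refinement of `G` obtained by inserting `n e` new vertices in the interior of
each edge `e` (subdividing `e` into `n e + 1` edges). -/
def subdivide (n : G.E → ℕ) : Multigraph where
  V := G.V ⊕ (Σ e : G.E, Fin (n e))
  E := Σ e : G.E, Fin (n e + 1)
  ends := fun x =>
    (if h : (x.2 : ℕ) = 0 then Sum.inl (G.ends x.1).1
        else Sum.inr ⟨x.1, ⟨(x.2 : ℕ) - 1, by have := x.2.isLt; omega⟩⟩,
     if h : (x.2 : ℕ) = n x.1 then Sum.inl (G.ends x.1).2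
        else Sum.inr ⟨x.1, ⟨(x.2 : ℕ), by have := x.2.isLt; omega⟩⟩)

/-- The natural map `σ* : Div(G) → Div(G̃)` to a refinement, extending a divisor by
zero on the new vertices. -/
def subdivMap (n : G.E → ℕ) (D : G.V → ℤ) : (G.subdivide n).V → ℤ := Sum.elim D 0

/-- `Ĝ`: the loopless refinement obtained by inserting one new vertex in the interior of
every loop-edge. -/
def hat : Multigraph := G.subdivide fun e => if (G.ends e).1 = (G.ends e).2 then 1 else 0

/-- The rank `r#_G(D) := r_{Ĝ}(σ* D)`. -/
noncomputable def rankSharp (D : G.V → ℤ) : ℤ :=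
  G.hat.rank (G.subdivMap (fun e => if (G.ends e).1 = (G.ends e).2 then 1 else 0) D)

/-- A multigraph is loopless if no edge is a loop. -/
def Loopless : Prop := ∀ e : G.E, (G.ends e).1 ≠ (G.ends e).2

/-- The genus (first Betti number) `g = |E| - |V| + 1` of a connected graph. -/
def genus : ℤ := (Fintype.card G.E : ℤ) - (Fintype.card G.V : ℤ) + 1

/-- The canonical divisor `K#_G = Σ_v (val(v) - 2) v`. -/
def canonical : G.V → ℤ := fun v => (G.valency v : ℤ) - 2

/-- The loopless graph obtained from `G` by removing all loop-edges. -/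
def removeLoops : Multigraph where
  V := G.V
  E := {e : G.E // (G.ends e).1 ≠ (G.ends e).2}
  ends := fun e => G.ends e.1

/-- The virtual graph `G^ω` of a weighted graph `(G, ω)`: attach `ω v` loops at each
vertex `v`. -/
def virt (w : G.V → ℕ) : Multigraph where
  V := G.V
  E := G.E ⊕ (Σ v : G.V, Fin (w v))
  ends := Sum.elim G.ends fun p => (p.1, p.1)

/-- The rank of a divisor on the weighted graph `(G, ω)`: `r_{(G,ω)}(D) := r#_{G^ω}(D)`. -/
noncomputable def rankW (w : G.V → ℕ) (D : G.V → ℤ) : ℤ := (G.virt w).rankSharp D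

/-- The canonical divisor of the weighted graph `(G, ω)`. -/
def canonicalW (w : G.V → ℕ) : G.V → ℤ := fun v => (G.valency v : ℤ) + 2 * (w v : ℤ) - 2

/-- The genus of the weighted graph `(G, ω)`: `b₁(G) + Σ_v ω(v)`. -/
def genusW (w : G.V → ℕ) : ℤ := G.genus + ∑ v, (w v : ℤ)

/-- The rose `R_g`: one vertex and `g` loop-edges. -/
def rose (g : ℕ) : Multigraph where
  V := Unit
  E := Fin g
  ends := fun _ => ((), ())

/-- The subgraph of `G` determined by a set of vertices and a set of edges with
endpoints among them. -/
def subgraph (Vs : Finset G.V) (Es : Finset G.E)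
    (h : ∀ e ∈ Es, (G.ends e).1 ∈ Vs ∧ (G.ends e).2 ∈ Vs) : Multigraph where
  V := {x : G.V // x ∈ Vs}
  E := {e : G.E // e ∈ Es}
  ends := fun e => (⟨(G.ends e.1).1, (h e.1 e.2).1⟩, ⟨(G.ends e.1).2, (h e.1 e.2).2⟩)

/-- Extension of a divisor on a subgraph by zero: `ι_* : Div(H) → Div(G)`. -/
def iota (Vs : Finset G.V) (D : {x : G.V // x ∈ Vs} → ℤ) : G.V → ℤ :=
  fun x => if h : x ∈ Vs then D ⟨x, h⟩ else 0

end Multigraph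

namespace Multigraph

/-- A decomposition `G = H₁ ∨ H₂` of `G` associated to a cut vertex `v`:  `H₁`, `H₂` are
connected subgraphs with `V(H₁) ∩ V(H₂) = {v}`, `E(H₁) ∩ E(H₂) = ∅`, covering `G`. -/
structure Wedge (G : Multigraph) where
  v : G.V
  V1 : Finset G.V
  V2 : Finset G.V
  hv1 : v ∈ V1
  hv2 : v ∈ V2
  E1 : Finset G.E
  E2 : Finset G.E
  cover_V : V1 ∪ V2 = Finset.univ
  inter_V : V1 ∩ V2 = {v}
  cover_E : E1 ∪ E2 = Finset.univ
  disj_E : E1 ∩ E2 = ∅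
  ends1 : ∀ e ∈ E1, (G.ends e).1 ∈ V1 ∧ (G.ends e).2 ∈ V1
  ends2 : ∀ e ∈ E2, (G.ends e).1 ∈ V2 ∧ (G.ends e).2 ∈ V2
  conn1 : (G.subgraph V1 E1 ends1).Connected
  conn2 : (G.subgraph V2 E2 ends2).Connected

/-- The first subgraph `H₁` of a wedge decomposition. -/
def Wedge.H1 {G : Multigraph} (W : G.Wedge) : Multigraph := G.subgraph W.V1 W.E1 W.ends1

/-- The second subgraph `H₂` of a wedge decomposition. -/
def Wedge.H2 {G : Multigraph} (W : G.Wedge) : Multigraph := G.subgraph W.V2 W.E2 W.ends2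

variable (G : Multigraph)

/-- The divisor `div(f)` of an integer-valued function `f` on the vertices
(loops contribute zero). -/
def divOf (f : G.V → ℤ) : G.V → ℤ := fun v =>
  ∑ e : G.E, ((if (G.ends e).1 = v then f v - f (G.ends e).2 else 0)
            + (if (G.ends e).2 = v then f v - f (G.ends e).1 else 0))

/-- An isomorphism of multigraphs (edges may be matched with either orientation). -/
structure Iso (G H : Multigraph) where
  vEquiv : G.V ≃ H.V
  eEquiv : G.E ≃ H.E
  compat : ∀ e : G.E,
    H.ends (eEquiv e) = (vEquiv (G.ends e).1, vEquiv (G.ends e).2) ∨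
    H.ends (eEquiv e) = (vEquiv (G.ends e).2, vEquiv (G.ends e).1)

end Multigraph
set_option linter.unusedSectionVars false

namespace RRaux

open Finset

variable {V : Type} [Fintype V] [DecidableEq V]

def lap (a : V → V → ℤ) (f : V → ℤ) : V → ℤ := fun v => ∑ w, a v w * (f v - f w)

def nu (a : V → V → ℤ) (p : V → ℤ) : V → ℤ := fun v => (∑ w, if p w < p v then a v w else 0) - 1

lemma lap_add (a : V → V → ℤ) (f g : V → ℤ) : lap a (f + g) = lap a f + lap a g := by
  funext v
  simp only [lap, Pi.add_apply, ← sum_add_distrib]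
  exact sum_congr rfl fun w _ => by ring

lemma lap_smul (a : V → V → ℤ) (c : ℤ) (f : V → ℤ) : lap a (c • f) = c • lap a f := by
  funext v
  simp only [lap, Pi.smul_apply, smul_eq_mul, mul_sum]
  exact sum_congr rfl fun w _ => by ring

lemma lap_neg (a : V → V → ℤ) (f : V → ℤ) : lap a (-f) = - lap a f := by
  have := lap_smul a (-1) f
  simpa using this

lemma lap_sub (a : V → V → ℤ) (f g : V → ℤ) : lap a (f - g) = lap a f - lap a g := by
  rw [sub_eq_add_neg, lap_add, lap_neg, sub_eq_add_neg]

lemma lap_symm (a : V → V → ℤ) (hs : ∀ v w, a v w = a w v) (f g : V → ℤ) :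
    ∑ v, g v * lap a f v = ∑ v, f v * lap a g v := by
  have h1 : ∀ f g : V → ℤ, ∑ v, g v * lap a f v
      = ∑ v, ∑ w, a v w * (g v * f v) - ∑ v, ∑ w, a v w * (g v * f w) := by
    intro f g
    simp only [lap, mul_sum, ← sum_sub_distrib]
    exact sum_congr rfl fun v _ => sum_congr rfl fun w _ => by ring
  rw [h1, h1, sum_comm (f := fun v w => a v w * (g v * f w))]
  congr 1
  · exact sum_congr rfl fun v _ => sum_congr rfl fun w _ => by ring
  · exact sum_congr rfl fun v _ => sum_congr rfl fun w _ => by rw [hs w v]; ring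

lemma lap_sum (a : V → V → ℤ) (hs : ∀ v w, a v w = a w v) (f : V → ℤ) :
    ∑ v, lap a f v = 0 := by
  have := lap_symm a hs f 1
  simpa [lap] using this

/-- `nu` is not equivalent to an effective divisor. -/
lemma nu_not_eff [Nonempty V] (a : V → V → ℤ) (ha : ∀ v w, 0 ≤ a v w) (p : V → ℤ) (f : V → ℤ)
    (h : ∀ v, 0 ≤ nu a p v - lap a f v) : False := by
  obtain ⟨m, -, hm⟩ := exists_max_image univ f univ_nonempty
  obtain ⟨v, hv, hv'⟩ := exists_min_image (univ.filter fun v => f v = f m) p ⟨m, by simp⟩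
  simp only [mem_filter, mem_univ, true_and] at hv hv'
  have h1 := h v
  have h2 : (∑ w, if p w < p v then a v w else 0) ≤ lap a f v := by
    refine sum_le_sum fun w _ => ?_
    have h3 := hm w (mem_univ w)
    split_ifs with hp
    · have h4 : f w ≠ f m := fun h => by
        have := hv' w h; omega
      have h5 : 1 ≤ f v - f w := by omega
      nlinarith [ha v w]
    · have h5 : 0 ≤ f v - f w := by omega
      exact mul_nonneg (ha v w) h5
  simp only [nu] at h1
  omega

/-- A strictly superharmonic function off `q`. -/
lemma exists_b (a : V → V → ℤ) (ha : ∀ v w, 0 ≤ a v w) (hs : ∀ v w, a v w = a w v)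
    (hc : ∀ S : Finset V, S.Nonempty → S ≠ univ → ∃ s ∈ S, ∃ u, u ∉ S ∧ 0 < a s u) (q : V) :
    ∃ b : V → ℤ, b q = 0 ∧ (∀ v, 0 ≤ b v) ∧ ∀ v, v ≠ q → 1 ≤ lap a b v := by
  let good : Finset V → Prop := fun S => q ∈ S ∧ ∃ b : V → ℤ, b q = 0 ∧ (∀ v, 0 ≤ b v) ∧
    (∀ u, u ∉ S → ∀ v, b v ≤ b u) ∧ ∀ v ∈ S, v ≠ q → 1 ≤ lap a b v
  have hg : good {q} := ⟨by simp, 0, by simp, by simp, by simp, by simp⟩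
  classical
  obtain ⟨S, hS, hmax⟩ := exists_max_image (univ.filter good) card ⟨{q}, by simp [hg]⟩
  simp only [mem_filter, mem_univ, true_and] at hS hmax
  obtain ⟨hq, b, hbq, hb0, hbm, hb⟩ := hS
  by_cases hSu : S = univ
  · exact ⟨b, hbq, hb0, fun v hv => hb v (by simp [hSu]) hv⟩
  exfalso
  obtain ⟨s, hsS, u, hu, hsu⟩ := hc S ⟨q, hq⟩ hSu
  let C : ℤ := ∑ v, ∑ w, a v w
  have hC : ∀ v, ∑ w, a v w ≤ C := fun v =>
    single_le_sum (f := fun v => ∑ w, a v w) (fun v _ => sum_nonneg fun w _ => ha v w) (mem_univ v)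
  have hC0 : 0 ≤ C := sum_nonneg fun v _ => sum_nonneg fun w _ => ha v w
  let χ : V → ℤ := fun v => if v ∈ S then 0 else 1
  have hχ : good (insert u S) := by
    refine ⟨by simp [hq], (C + 1) • b + χ, by simp [hbq, χ, hq], ?_, ?_, ?_⟩
    · intro v
      have := hb0 v
      have h2 : 0 ≤ χ v := by simp only [χ]; split_ifs <;> simp
      simp only [Pi.add_apply, Pi.smul_apply, smul_eq_mul]
      positivity
    · intro x hx v
      have hx' : x ∉ S := fun h => hx (by simp [h])
      have := hbm x hx' v
      have h2 : χ v ≤ χ x := by simp only [χ, if_neg hx']; split_ifs <;> simp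
      simp only [Pi.add_apply, Pi.smul_apply, smul_eq_mul]
      nlinarith
    · intro v hv hvq
      rw [lap_add, lap_smul]
      simp only [Pi.add_apply, Pi.smul_apply, smul_eq_mul]
      by_cases hvS : v ∈ S
      · have h1 := hb v hvS hvq
        have h2 : -C ≤ lap a χ v := by
          have : -(∑ w, a v w) ≤ lap a χ v := by
            rw [← sum_neg_distrib]
            refine sum_le_sum fun w _ => ?_
            have := ha v w
            simp only [χ, hvS]
            split_ifs <;> simp <;> omega
          have := hC v
          omega
        nlinarith
      · have hvu : v = u := by simpa [hvS] using hv
        subst hvu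
        have h1 : 0 ≤ lap a b v := sum_nonneg fun w _ =>
          mul_nonneg (ha v w) (by have := hbm v hvS w; omega)
        have h2 : a v s ≤ lap a χ v := by
          have h3 : ∀ w ∈ univ, 0 ≤ a v w * (χ v - χ w) := fun w _ =>
            mul_nonneg (ha v w) (by simp only [χ, if_neg hvS]; split_ifs <;> simp)
          have := single_le_sum h3 (mem_univ s)
          have h4 : a v s * (χ v - χ s) = a v s := by simp [χ, hvS, hsS]
          rw [h4] at this
          exact this
        rw [hs] at hsu
        nlinarith
  have := hmax _ hχ
  rw [card_insert_of_notMem hu] at this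
  omega

lemma exists_reduced (a : V → V → ℤ) (ha : ∀ v w, 0 ≤ a v w) (hs : ∀ v w, a v w = a w v)
    (hc : ∀ S : Finset V, S.Nonempty → S ≠ univ → ∃ s ∈ S, ∃ u, u ∉ S ∧ 0 < a s u) (q : V)
    (D : V → ℤ) : ∃ f : V → ℤ, (∀ v, v ≠ q → 0 ≤ D v - lap a f v) ∧
      ∀ A : Finset V, A.Nonempty → q ∉ A →
        ∃ v ∈ A, D v - lap a f v < ∑ w, if w ∈ A then 0 else a v w := by
  obtain ⟨b, hbq, hb0, hb⟩ := exists_b a ha hs hc q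
  let P : ℕ → Prop := fun n => ∃ f : V → ℤ, (∀ v, v ≠ q → 0 ≤ D v - lap a f v) ∧
    ∑ v, b v * (D v - lap a f v) = n
  have hnn : ∀ f : V → ℤ, (∀ v, v ≠ q → 0 ≤ D v - lap a f v) →
      0 ≤ ∑ v, b v * (D v - lap a f v) := fun f hf => sum_nonneg fun v _ => by
    by_cases hv : v = q
    · simp [hv, hbq]
    · exact mul_nonneg (hb0 v) (hf v hv)
  have hP : ∃ n, P n := by
    let M : ℤ := ∑ v, |D v|
    have hM : ∀ v, |D v| ≤ M := fun v =>
      single_le_sum (f := fun v => |D v|) (fun v _ => abs_nonneg _) (mem_univ v)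
    have h0 : ∀ v, v ≠ q → 0 ≤ D v - lap a ((-M) • b) v := by
      intro v hv
      have h1 := hb v hv
      have h2 := hM v
      have h3 := neg_abs_le (D v)
      have h4 := abs_nonneg (D v)
      rw [lap_smul]
      simp only [Pi.smul_apply, smul_eq_mul]
      nlinarith
    obtain ⟨n, hn⟩ := Int.eq_ofNat_of_zero_le (hnn _ h0)
    exact ⟨n, _, h0, hn⟩
  classical
  obtain ⟨f, hf, hfn⟩ := Nat.find_spec hP
  refine ⟨f, hf, fun A hA hqA => ?_⟩
  by_contra! hcon
  let χ : V → ℤ := fun v => if v ∈ A then 1 else 0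
  have hlin : ∀ v ∈ A, lap a χ v = ∑ w, if w ∈ A then 0 else a v w := by
    intro v hv
    refine sum_congr rfl fun w _ => ?_
    simp only [χ, hv]
    split_ifs <;> simp
  have hlout : ∀ v, v ∉ A → lap a χ v ≤ 0 := by
    intro v hv
    refine sum_nonpos fun w _ => ?_
    have := ha v w
    simp only [χ, if_neg hv]
    split_ifs <;> simp <;> omega
  have hf' : ∀ v, v ≠ q → 0 ≤ D v - lap a (f + χ) v := by
    intro v hv
    rw [lap_add, Pi.add_apply]
    by_cases hvA : v ∈ A
    · have := hcon v hvA
      rw [hlin v hvA]; omega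
    · have := hlout v hvA
      have := hf v hv
      omega
  obtain ⟨n, hn⟩ := Int.eq_ofNat_of_zero_le (hnn _ hf')
  have hmin := Nat.find_min' hP (m := n) ⟨_, hf', hn⟩
  have hdec : ∑ v, b v * (D v - lap a (f + χ) v) = ∑ v, b v * (D v - lap a f v)
      - ∑ v, χ v * lap a b v := by
    rw [← lap_symm a hs, ← sum_sub_distrib, lap_add]
    exact sum_congr rfl fun v _ => by rw [Pi.add_apply]; ring
  have hpos : 0 < ∑ v, χ v * lap a b v := by
    simp only [χ, ite_mul, one_mul, zero_mul, sum_ite_mem, univ_inter]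
    refine sum_pos (fun v hv => ?_) hA
    have := hb v (fun h => hqA (h ▸ hv))
    omega
  omega

lemma exists_order (a : V → V → ℤ) (q : V) (D : V → ℤ)
    (h : ∀ A : Finset V, A.Nonempty → q ∉ A →
        ∃ v ∈ A, D v < ∑ w, if w ∈ A then 0 else a v w) :
    ∃ p : V → ℤ, Function.Injective p ∧
      ∀ v, v ≠ q → D v ≤ nu a p v := by
  let good : Finset V → Prop := fun B => q ∈ B ∧ ∃ p : V → ℤ, Set.InjOn p B ∧
    (∀ v ∈ B, p v < B.card) ∧
    ∀ v ∈ B, v ≠ q → D v < ∑ w, if w ∈ B ∧ p w < p v then a v w else 0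
  have hg : good {q} := ⟨by simp, 0, by simp, by simp, by simp⟩
  classical
  obtain ⟨B, hB, hmax⟩ := exists_max_image (univ.filter good) card ⟨{q}, by simp [hg]⟩
  simp only [mem_filter, mem_univ, true_and] at hB hmax
  obtain ⟨hq, p, hinj, hlt, hD⟩ := hB
  by_cases hBu : B = univ
  · subst hBu
    refine ⟨p, by simpa [Set.injOn_univ] using hinj, fun v hv => ?_⟩
    have := hD v (mem_univ v) hv
    simp only [mem_univ, true_and] at this
    simp only [nu]
    omega
  exfalso
  obtain ⟨u, huB, hu⟩ := h Bᶜ (by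
    rw [nonempty_iff_ne_empty]; simpa using hBu) (by simpa using hq)
  rw [mem_compl] at huB
  have hne : ∀ v ∈ B, v ≠ u := fun v hv h => huB (h ▸ hv)
  have : good (insert u B) := by
    refine ⟨by simp [hq], Function.update p u B.card, ?_, ?_, ?_⟩
    · intro x hx y hy hxy
      simp only [coe_insert, Set.mem_insert_iff, mem_coe] at hx hy
      rcases hx with rfl | hx <;> rcases hy with rfl | hy
      · rfl
      · have := hlt y hy
        simp [Function.update_of_ne (hne y hy)] at hxy
        omega
      · have := hlt x hx
        simp [Function.update_of_ne (hne x hx)] at hxy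
        omega
      · simp only [Function.update_of_ne (hne x hx), Function.update_of_ne (hne y hy)] at hxy
        exact hinj hx hy hxy
    · intro v hv
      rw [card_insert_of_notMem huB]
      push_cast
      rcases mem_insert.1 hv with rfl | hv
      · simp
      · rw [Function.update_of_ne (hne v hv)]
        have := hlt v hv
        omega
    · intro v hv hvq
      rcases mem_insert.1 hv with rfl | hv'
      · refine hu.trans_eq (sum_congr rfl fun w _ => ?_)
        by_cases hw : w ∈ B
        · have := hlt w hw
          simp [hw, Function.update_of_ne (hne w hw), this]
        · by_cases hwv : w = v
          · simp [hwv, huB]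
          · simp [hw, hwv]
      · refine (hD v hv' hvq).trans_eq (sum_congr rfl fun w _ => ?_)
        by_cases hw : w ∈ B
        · simp [hw, Function.update_of_ne (hne w hw), Function.update_of_ne (hne v hv')]
        · by_cases hwv : w = u
          · have := hlt v hv'
            have h3 : ¬ ((B.card : ℤ) < p v) := by omega
            simp [hwv, huB, Function.update_of_ne (hne v hv'), h3]
          · simp [hw, hwv]
  have := hmax _ this
  rw [card_insert_of_notMem huB] at this
  omega

lemma eff_or (a : V → V → ℤ) (ha : ∀ v w, 0 ≤ a v w) (hs : ∀ v w, a v w = a w v)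
    (hc : ∀ S : Finset V, S.Nonempty → S ≠ univ → ∃ s ∈ S, ∃ u, u ∉ S ∧ 0 < a s u) (q : V)
    (D : V → ℤ) : ∃ f : V → ℤ, (∀ v, 0 ≤ D v - lap a f v) ∨
      ∃ p : V → ℤ, Function.Injective p ∧ ∀ v, D v - lap a f v ≤ nu a p v := by
  obtain ⟨f, hf, hA⟩ := exists_reduced a ha hs hc q D
  refine ⟨f, ?_⟩
  by_cases hq : 0 ≤ D q - lap a f q
  · left; intro v
    by_cases hv : v = q
    · exact hv ▸ hq
    · exact hf v hv
  · right
    obtain ⟨p, hp, hD⟩ := exists_order a q (fun v => D v - lap a f v) hA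
    refine ⟨p, hp, fun v => ?_⟩
    by_cases hv : v = q
    · have : 0 ≤ ∑ w, (if p w < p v then a v w else 0) := sum_nonneg fun w _ => by
        split_ifs; exacts [ha _ _, le_rfl]
      subst hv
      simp only [nu]
      omega
    · exact hD v hv

def NN (a : V → V → ℤ) (D : V → ℤ) (k : ℤ) : Prop :=
  ∃ (f p E F : V → ℤ), Function.Injective p ∧ (∀ v, 0 ≤ E v) ∧ (∀ v, 0 ≤ F v) ∧
    ∑ v, E v = k ∧ D - lap a f - nu a p = E - F

lemma not_R_iff [Nonempty V] (a : V → V → ℤ) (ha : ∀ v w, 0 ≤ a v w) (hs : ∀ v w, a v w = a w v)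
    (hc : ∀ S : Finset V, S.Nonempty → S ≠ univ → ∃ s ∈ S, ∃ u, u ∉ S ∧ 0 < a s u)
    (D : V → ℤ) (k : ℤ) :
    NN a D k ↔ ¬ ∀ E : V → ℤ, (∀ v, 0 ≤ E v) → ∑ v, E v = k →
      ∃ F : V → ℤ, (∀ v, 0 ≤ F v) ∧ ∃ f, D - E - F = lap a f := by
  constructor
  · rintro ⟨f, p, E, F, -, hE, hF, hk, h⟩ hR
    obtain ⟨F', hF', f', h'⟩ := hR E hE hk
    refine nu_not_eff a ha p (f' - f) fun v => ?_
    have h1 := congrFun h v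
    have h2 := congrFun h' v
    rw [lap_sub]
    simp only [Pi.sub_apply] at *
    have := hF v
    have := hF' v
    omega
  · intro hR
    push Not at hR
    obtain ⟨E, hE, hk, hR⟩ := hR
    obtain ⟨f, hf | ⟨p, hp, hf⟩⟩ := eff_or a ha hs hc (Classical.arbitrary V) (D - E)
    · exact absurd (by abel) (hR (D - E - lap a f) hf f)
    · exact ⟨f, p, E, nu a p - (D - E - lap a f), hp, hE,
        fun v => by have := hf v; simp only [Pi.sub_apply] at *; omega, hk, by abel⟩

def can (a : V → V → ℤ) : V → ℤ := fun v => (∑ w, a v w) - 2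

lemma nu_add (a : V → V → ℤ) (h0 : ∀ v, a v v = 0) (p : V → ℤ) (hp : Function.Injective p) :
    nu a p + nu a (-p) = can a := by
  funext v
  simp only [Pi.add_apply, nu, can]
  have : ∑ w, a v w = (∑ w, if p w < p v then a v w else 0)
      + ∑ w, if (-p) w < (-p) v then a v w else 0 := by
    rw [← sum_add_distrib]
    refine sum_congr rfl fun w _ => ?_
    by_cases hw : w = v
    · simp [hw, h0]
    · have : p w ≠ p v := fun h => hw (hp h)
      simp only [Pi.neg_apply, neg_lt_neg_iff]
      split_ifs <;> simp <;> omega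
  omega

lemma nu_deg_neg (a : V → V → ℤ) (hs : ∀ v w, a v w = a w v) (p : V → ℤ) :
    ∑ v, nu a (-p) v = ∑ v, nu a p v := by
  simp only [nu, sum_sub_distrib]
  rw [sum_comm]
  congr 1
  refine sum_congr rfl fun v _ => sum_congr rfl fun w _ => ?_
  simp only [Pi.neg_apply, neg_lt_neg_iff, hs v w]

lemma NN_dual (a : V → V → ℤ) (hs : ∀ v w, a v w = a w v) (h0 : ∀ v, a v v = 0)
    (g : ℤ) (hg : ∑ v, can a v = 2 * g) (D : V → ℤ) (k : ℤ) (h : NN a D k) :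
    0 ≤ k ∧ NN a (can a - D) (k - ∑ v, D v + g) := by
  obtain ⟨f, p, E, F, hp, hE, hF, hk, h⟩ := h
  have hnu := nu_add a h0 p hp
  have hd : ∑ v, nu a p v = g := by
    have h1 := nu_deg_neg a hs p
    rw [← hnu] at hg
    simp only [Pi.add_apply, sum_add_distrib] at hg
    omega
  refine ⟨hk ▸ sum_nonneg fun v _ => hE v, -f, -p, F, E, fun x y hxy => hp (by simpa using hxy),
    hF, hE, ?_, ?_⟩
  · have := congrArg (fun D : V → ℤ => ∑ v, D v) h
    simp only [Pi.sub_apply, sum_sub_distrib, lap_sum a hs] at this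
    omega
  · rw [← hnu, lap_neg]
    have : F - E = -(E - F) := by abel
    rw [this, ← h]
    abel

lemma NN_succ [Nonempty V] (a : V → V → ℤ) (D : V → ℤ) (k : ℤ) (h : NN a D k) :
    NN a D (k + 1) := by
  obtain ⟨f, p, E, F, hp, hE, hF, hk, h⟩ := h
  have hx : ∀ v, 0 ≤ (Pi.single (Classical.arbitrary V) 1 : V → ℤ) v := fun v => by
    rw [Pi.single_apply]; split_ifs <;> simp
  refine ⟨f, p, E + Pi.single (Classical.arbitrary V) 1, F + Pi.single (Classical.arbitrary V) 1, hp,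
    fun v => add_nonneg (hE v) (hx v), fun v => add_nonneg (hF v) (hx v), ?_, ?_⟩
  · simp [sum_add_distrib, hk]
  · rw [h]; abel

lemma NN_exists (a : V → V → ℤ) (D : V → ℤ) : ∃ k, NN a D k := by
  let p : V → ℤ := fun v => ((Fintype.equivFin V v : ℕ) : ℤ)
  have hp : Function.Injective p := fun x y h => by
    simpa [p, Fin.val_inj] using h
  refine ⟨_, 0, p, fun v => max (D v - nu a p v) 0, fun v => max (-(D v - nu a p v)) 0, hp,
    fun v => le_max_right _ _, fun v => le_max_right _ _, rfl, ?_⟩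
  funext v
  simp only [Pi.sub_apply, lap, Pi.zero_apply, sub_zero, mul_zero, sum_const_zero]
  rcases le_total 0 (D v - nu a p v) with h | h
  · rw [max_eq_left h, max_eq_right (by omega)]; omega
  · rw [max_eq_right h, max_eq_left (by omega)]; omega

/-- Least `k` with `NN`. -/
lemma exists_least [Nonempty V] (a : V → V → ℤ) (hs : ∀ v w, a v w = a w v) (h0 : ∀ v, a v v = 0)
    (g : ℤ) (hg : ∑ v, can a v = 2 * g) (D : V → ℤ) :
    ∃ k0 : ℤ, 0 ≤ k0 ∧ ∀ k, NN a D k ↔ k0 ≤ k := by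
  obtain ⟨k0, hk0, hmin⟩ := Int.exists_least_of_bdd (P := NN a D)
    ⟨0, fun z hz => (NN_dual a hs h0 g hg D z hz).1⟩ (NN_exists a D)
  refine ⟨k0, (NN_dual a hs h0 g hg D k0 hk0).1, fun k => ⟨hmin k, fun h => ?_⟩⟩
  exact Int.leInduction hk0 (fun n _ hn => NN_succ a D n hn) k h

end RRaux

namespace Multigraph

open Finset RRaux

variable (G : Multigraph)

lemma numEdges_symm (v w : G.V) : G.numEdges v w = G.numEdges w v := by
  simp only [numEdges, or_comm]

lemma numEdges_self (hl : G.Loopless) (v : G.V) : G.numEdges v v = 0 := by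
  simp only [numEdges, card_eq_zero, filter_eq_empty_iff]
  intro e _ h
  rw [or_self] at h
  exact hl e (by rw [h])

lemma valency_eq (hl : G.Loopless) (v : G.V) : G.valency v = ∑ w, G.numEdges v w := by
  simp only [valency, numEdges, card_filter]
  rw [sum_comm]
  refine sum_congr rfl fun e _ => ?_
  have hle := hl e
  rcases h : G.ends e with ⟨x, y⟩
  rw [h] at hle
  simp only [ne_eq, Prod.mk.injEq] at *
  by_cases hx : x = v
  · subst hx
    simp [Ne.symm hle]
  · by_cases hy : y = v
    · subst hy
      simp [hx]
    · simp [hx, hy]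

lemma sum_valency : ∑ v, G.valency v = 2 * Fintype.card G.E := by
  simp only [valency]
  rw [sum_comm]
  simp [sum_add_distrib]
  omega

/-- Weights. -/
def wt : G.V → G.V → ℤ := fun v w => G.numEdges v w

lemma lap_eq (hl : G.Loopless) (f : G.V → ℤ) : lap G.wt f = - ∑ v, f v • G.T v := by
  funext w
  simp only [Pi.neg_apply, Finset.sum_apply, Pi.smul_apply, smul_eq_mul, T, lap]
  have h1 : ∀ v, f v * G.inter v w = f v * G.wt w v - if v = w then f w * G.valency w else 0 := by
    intro v
    simp only [inter, wt]
    by_cases h : v = w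
    · subst h
      have : G.numLoops v = 0 := by
        have := G.numEdges_self hl v
        simpa [numEdges, numLoops] using this
      simp [this, G.numEdges_self hl]
    · simp [h, G.numEdges_symm v w]
  simp only [h1, sum_sub_distrib, sum_ite_eq', mem_univ, if_true]
  rw [G.valency_eq hl]
  push_cast
  simp only [mul_sub, sum_sub_distrib, mul_sum, wt]
  rw [neg_sub]
  congr 1 <;> exact sum_congr rfl fun v _ => mul_comm _ _

lemma mem_Prin (hl : G.Loopless) (D : G.V → ℤ) : D ∈ G.Prin ↔ ∃ f, D = lap G.wt f := by
  constructor
  · intro h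
    induction h using AddSubgroup.closure_induction with
    | mem x hx =>
      obtain ⟨v, rfl⟩ := hx
      refine ⟨-Pi.single v 1, ?_⟩
      rw [lap_neg, G.lap_eq hl, neg_neg, sum_eq_single v]
      · simp
      · intro w _ hw; simp [hw]
      · simp
    | zero => exact ⟨0, by simp [G.lap_eq hl]⟩
    | add x y _ _ hx hy =>
      obtain ⟨f, rfl⟩ := hx
      obtain ⟨g, rfl⟩ := hy
      exact ⟨f + g, (lap_add _ _ _).symm⟩
    | neg x _ hx =>
      obtain ⟨f, rfl⟩ := hx
      exact ⟨-f, (lap_neg _ _).symm⟩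
  · rintro ⟨f, rfl⟩
    rw [G.lap_eq hl]
    exact neg_mem (sum_mem fun v _ => zsmul_mem (AddSubgroup.subset_closure (Set.mem_range_self v)) _)

lemma conn_cut (hG : G.Connected) (S : Finset G.V) (hS : S.Nonempty) (hSu : S ≠ univ) :
    ∃ s ∈ S, ∃ u, u ∉ S ∧ 0 < G.wt s u := by
  by_contra! hcon
  obtain ⟨s, hs⟩ := hS
  apply hSu
  rw [eq_univ_iff_forall]
  intro x
  induction hG.2 s x with
  | refl => exact hs
  | @tail b c _ hbc ih =>
    by_contra hc
    have := hcon b ih c hc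
    obtain ⟨e, he⟩ := hbc
    have h2 : 0 < G.numEdges b c := card_pos.2 ⟨e, by simpa using he⟩
    simp only [wt] at this
    omega

lemma can_eq (hl : G.Loopless) : can G.wt = G.canonical := by
  funext v
  simp only [can, canonical, wt, G.valency_eq hl]
  push_cast
  rfl

theorem RR_loopless (hG : G.Connected) (hl : G.Loopless) (D : G.V → ℤ) :
    G.rank D - G.rank (G.canonical - D) = degree D - G.genus + 1 := by
  have := hG.1
  have ha : ∀ v w, 0 ≤ G.wt v w := fun v w => by simp [wt]
  have hs : ∀ v w, G.wt v w = G.wt w v := fun v w => by simp [wt, G.numEdges_symm v w]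
  have h0 : ∀ v, G.wt v v = 0 := fun v => by simp [wt, G.numEdges_self hl]
  have hc := G.conn_cut hG
  have hg : ∑ v, can G.wt v = 2 * (G.genus - 1) := by
    rw [G.can_eq hl]
    have := G.sum_valency
    simp only [canonical, genus, sum_sub_distrib]
    rw [← Nat.cast_sum, this]
    simp
    ring
  have key : ∀ D : G.V → ℤ, ∀ k0 : ℤ, 0 ≤ k0 → (∀ k, NN G.wt D k ↔ k0 ≤ k) →
      G.rank D = k0 - 1 := by
    intro D k0 hk0 h
    have : {r : ℤ | r = -1 ∨ (0 ≤ r ∧ ∀ E : G.V → ℤ, Effective E → degree E = r →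
      ∃ F : G.V → ℤ, Effective F ∧ D - E - F ∈ G.Prin)} = Set.Icc (-1) (k0 - 1) := by
      ext r
      have h1 := not_R_iff G.wt ha hs hc D r
      rw [h r] at h1
      simp only [Set.mem_ofPred_eq, Set.mem_Icc, G.mem_Prin hl, Effective, degree]
      rw [← not_iff_not.2 h1 |>.trans not_not]
      omega
    rw [rank, this, csSup_Icc (by omega)]
  obtain ⟨k0, hk0, h⟩ := exists_least G.wt hs h0 _ hg D
  obtain ⟨k1, hk1, h'⟩ := exists_least G.wt hs h0 _ hg (can G.wt - D)
  rw [← G.can_eq hl, key _ _ hk0 h, key _ _ hk1 h']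
  have e1 := (h' _).1 (NN_dual G.wt hs h0 _ hg D k0 ((h _).2 le_rfl)).2
  have e2 := (NN_dual G.wt hs h0 _ hg _ k1 ((h' _).2 le_rfl)).2
  rw [sub_sub_cancel, h] at e2
  simp only [Pi.sub_apply, sum_sub_distrib, hg] at e2
  simp only [degree]
  omega

/-! Subdivisions -/

variable (n : G.E → ℕ)

lemma subdivide_fst_inl (e : G.E) (i : Fin (n e + 1)) (v : G.V) :
    ((G.subdivide n).ends ⟨e, i⟩).1 = Sum.inl v ↔ i = 0 ∧ (G.ends e).1 = v := by
  simp only [subdivide]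
  by_cases h : (i : ℕ) = 0
  · have : i = 0 := Fin.ext h
    subst this
    simp
  · have : i ≠ 0 := fun h' => h (by simp [h'])
    simp [h, this]

lemma subdivide_snd_inl (e : G.E) (i : Fin (n e + 1)) (v : G.V) :
    ((G.subdivide n).ends ⟨e, i⟩).2 = Sum.inl v ↔ i = Fin.last (n e) ∧ (G.ends e).2 = v := by
  simp only [subdivide]
  by_cases h : (i : ℕ) = n e
  · have : i = Fin.last _ := Fin.ext h
    subst this
    simp
  · have : i ≠ Fin.last _ := fun h' => h (by simp [h'])
    simp [h, this]

lemma subdivide_fst_inr (x : (G.subdivide n).E) (e : G.E) (j : Fin (n e)) :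
    ((G.subdivide n).ends x).1 = Sum.inr ⟨e, j⟩ ↔ x = ⟨e, j.succ⟩ := by
  obtain ⟨e', i⟩ := x
  simp only [subdivide]
  refine Fin.cases ?_ (fun i => ?_) i
  · simp
    rintro rfl h
    have := congrArg Fin.val (eq_of_heq h)
    simp at this
  · simp
    rintro rfl
    simp

lemma subdivide_snd_inr (x : (G.subdivide n).E) (e : G.E) (j : Fin (n e)) :
    ((G.subdivide n).ends x).2 = Sum.inr ⟨e, j⟩ ↔ x = ⟨e, j.castSucc⟩ := by
  obtain ⟨e', i⟩ := x
  simp only [subdivide]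
  refine Fin.lastCases ?_ (fun i => ?_) i
  · simp
    rintro rfl h
    have := congrArg Fin.val (eq_of_heq h)
    simp at this
    omega
  · have : (i : ℕ) ≠ n e' := by omega
    simp [this]
    rintro rfl
    simp

lemma subdivide_val_inl (v : G.V) : (G.subdivide n).valency (Sum.inl v) = G.valency v := by
  simp only [valency]
  refine (Fintype.sum_sigma _).trans (sum_congr rfl fun e _ => ?_)
  simp only [subdivide_fst_inl, subdivide_snd_inl, sum_add_distrib, ite_and]
  simp

lemma valency_two (H : Multigraph) (x : H.V) (e₁ e₂ : H.E) (h1 : ∀ y, (H.ends y).1 = x ↔ y = e₁)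
    (h2 : ∀ y, (H.ends y).2 = x ↔ y = e₂) : H.valency x = 2 := by
  simp only [valency, h1, h2, sum_add_distrib, sum_ite_eq', mem_univ, if_true]

lemma subdivide_val_inr (e : G.E) (j : Fin (n e)) :
    (G.subdivide n).valency (Sum.inr ⟨e, j⟩) = 2 :=
  valency_two _ _ _ _ (fun y => G.subdivide_fst_inr n y e j) (fun y => G.subdivide_snd_inr n y e j)

lemma subdivide_canonical : (G.subdivide n).canonical = G.subdivMap n G.canonical := by
  funext x
  rcases x with v | ⟨e, j⟩
  · show ((G.subdivide n).valency (Sum.inl v) : ℤ) - 2 = G.valency v - 2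
    rw [subdivide_val_inl]
  · show ((G.subdivide n).valency (Sum.inr ⟨e, j⟩) : ℤ) - 2 = 0
    rw [subdivide_val_inr]
    simp

lemma subdivide_genus : (G.subdivide n).genus = G.genus := by
  have h1 : Fintype.card (G.subdivide n).E = ∑ e, n e + Fintype.card G.E := by
    refine (Fintype.card_sigma (α := fun e => Fin (n e + 1))).trans ?_
    simp [sum_add_distrib]
  have h2 : Fintype.card (G.subdivide n).V = Fintype.card G.V + ∑ e, n e := by
    refine (Fintype.card_sum (α := G.V) (β := Σ e : G.E, Fin (n e))).trans ?_
    simp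
  simp only [genus, h1, h2]
  push_cast
  ring

lemma subdivide_degree (D : G.V → ℤ) : degree (G.subdivMap n D) = degree D := by
  refine (Fintype.sum_sum_type (α₁ := G.V) (α₂ := Σ e : G.E, Fin (n e)) _).trans ?_
  simp [subdivMap, degree]

lemma adj_symm {v w : G.V} (h : G.Adj v w) : G.Adj w v := by
  obtain ⟨e, he⟩ := h
  exact ⟨e, he.symm⟩

lemma reach_symm {v w : G.V} (h : Relation.ReflTransGen G.Adj v w) :
    Relation.ReflTransGen G.Adj w v := by
  induction h with
  | refl => exact .refl
  | tail _ h ih => exact .head (G.adj_symm h) ih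

lemma reach_start (e : G.E) : ∀ (k : ℕ) (hk : k < n e),
    Relation.ReflTransGen (G.subdivide n).Adj (Sum.inl (G.ends e).1) (Sum.inr ⟨e, ⟨k, hk⟩⟩) := by
  intro k
  induction k with
  | zero =>
    intro hk
    refine .single ⟨⟨e, 0⟩, Or.inl (Prod.ext ?_ ?_)⟩
    · exact (G.subdivide_fst_inl n e 0 _).2 ⟨rfl, rfl⟩
    · exact (G.subdivide_snd_inr n _ e ⟨0, hk⟩).2 rfl
  | succ k ih =>
    intro hk
    refine .tail (ih (by omega)) ⟨⟨e, ⟨k + 1, by omega⟩⟩, Or.inl (Prod.ext ?_ ?_)⟩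
    · exact (G.subdivide_fst_inr n _ e ⟨k, by omega⟩).2 rfl
    · exact (G.subdivide_snd_inr n _ e ⟨k + 1, hk⟩).2 rfl

lemma reach_end (e : G.E) :
    Relation.ReflTransGen (G.subdivide n).Adj (Sum.inl (G.ends e).1) (Sum.inl (G.ends e).2) := by
  have h2 := (G.subdivide_snd_inl n e (Fin.last _) _).2 ⟨rfl, rfl⟩
  rcases Nat.eq_zero_or_pos (n e) with h | h
  · refine .single ⟨⟨e, Fin.last _⟩, Or.inl (Prod.ext ?_ h2)⟩
    exact (G.subdivide_fst_inl n e _ _).2 ⟨Fin.ext (by simp [h]), rfl⟩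
  · refine .tail (G.reach_start n e (n e - 1) (by omega)) ⟨⟨e, Fin.last _⟩, Or.inl (Prod.ext ?_ h2)⟩
    refine (G.subdivide_fst_inr n _ e ⟨n e - 1, by omega⟩).2 ?_
    congr 1
    exact Fin.ext (by simp; omega)

lemma subdivide_connected (hG : G.Connected) : (G.subdivide n).Connected := by
  have h1 : ∀ v w, Relation.ReflTransGen G.Adj v w →
      Relation.ReflTransGen (G.subdivide n).Adj (Sum.inl v) (Sum.inl w) := by
    intro v w h
    induction h with
    | refl => exact .refl
    | @tail b c _ h ih =>
      refine ih.trans ?_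
      obtain ⟨e, he | he⟩ := h
      · have := G.reach_end n e
        rwa [he] at this
      · have := G.reach_end n e
        rw [he] at this
        exact (G.subdivide n).reach_symm this
  obtain ⟨⟨v0⟩, hG⟩ := hG
  have h2 : ∀ x, Relation.ReflTransGen (G.subdivide n).Adj (Sum.inl v0) x := by
    intro x
    rcases x with v | ⟨e, j⟩
    · exact h1 _ _ (hG _ _)
    · exact (h1 _ _ (hG _ _)).trans (G.reach_start n e j j.2)
  exact ⟨⟨Sum.inl v0⟩, fun x y => ((G.subdivide n).reach_symm (h2 x)).trans (h2 y)⟩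

lemma subdivide_loopless (hn : ∀ e, (G.ends e).1 = (G.ends e).2 → 0 < n e) :
    (G.subdivide n).Loopless := by
  rintro ⟨e, i⟩ h
  rcases h' : ((G.subdivide n).ends ⟨e, i⟩).2 with v | ⟨e', j⟩
  · rw [h'] at h
    obtain ⟨h1, h2⟩ := (G.subdivide_fst_inl n e i v).1 h
    obtain ⟨h3, h4⟩ := (G.subdivide_snd_inl n e i v).1 h'
    have h5 := hn e (h2.trans h4.symm)
    rw [h1] at h3
    have := congrArg Fin.val h3
    simp at this
    omega
  · rw [h'] at h
    have h1 := (G.subdivide_fst_inr n _ e' j).1 h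
    have h2 : (⟨e', j.castSucc⟩ : Σ e, Fin (n e + 1)) = ⟨e', j.succ⟩ :=
      ((G.subdivide_snd_inr n _ e' j).1 h').symm.trans h1
    simp [Fin.ext_iff] at h2

end Multigraph


open Multigraph in
/-- Riemann–Roch for graphs with loops.  For a connected graph `G`
of genus `g = |E| - |V| + 1` and any divisor `D`,
`r#_G(D) - r#_G(K#_G - D) = deg D - g + 1`. -/
theorem riemann_roch_graph_with_loops (G : Multigraph) (hG : G.Connected) (D : G.V → ℤ) :
    G.rankSharp D - G.rankSharp (G.canonical - D) = Multigraph.degree D - G.genus + 1 := by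
  have hn : ∀ e, (G.ends e).1 = (G.ends e).2 →
      0 < (fun e => if (G.ends e).1 = (G.ends e).2 then 1 else 0 : G.E → ℕ) e := by
    intro e he
    show 0 < if (G.ends e).1 = (G.ends e).2 then 1 else 0
    rw [if_pos he]
    exact one_pos
  have h := (G.subdivide _).RR_loopless (G.subdivide_connected _ hG) (G.subdivide_loopless _ hn)
    (G.subdivMap _ D)
  rw [G.subdivide_genus, G.subdivide_degree, G.subdivide_canonical] at h
  have hsub : ∀ n : G.E → ℕ, G.subdivMap n (G.canonical - D)
      = G.subdivMap n G.canonical - G.subdivMap n D := by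
    intro n
    funext x
    rcases x with v | x
    · rfl
    · show (0 : ℤ) = 0 - 0
      rfl
  rw [rankSharp, rankSharp, hsub]
  exact h
end

section
/- Let g ≥ 1 and d ≤ 2g be integers with d ≥ 0, and let R_g be the connected graph of genus g having exactly one vertex (hence g loop-edges). Then the unique effective divisor D of degree d on R_g (namely d times the vertex) satisfies r#_{R_g}(D) = ⌊d/2⌋. -/
namespace Multigraph

abbrev RH (g : ℕ) : Multigraph := (rose g).subdivide (fun _ => 1)

def rc (g : ℕ) : (RH g).V := Sum.inl ()
def ru (g : ℕ) (i : Fin g) : (RH g).V := Sum.inr ⟨i, (0 : Fin 1)⟩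

lemma rh_ends0 (g : ℕ) (i : Fin g) : (RH g).ends ⟨i, (0 : Fin 2)⟩ = (rc g, ru g i) := rfl
lemma rh_ends1 (g : ℕ) (i : Fin g) : (RH g).ends ⟨i, (1 : Fin 2)⟩ = (ru g i, rc g) := rfl

lemma rh_sumE (g : ℕ) (f : (RH g).E → ℕ) :
    ∑ e, f e = ∑ i : Fin g, (f ⟨i, (0 : Fin 2)⟩ + f ⟨i, (1 : Fin 2)⟩) := by
  have h : ∑ e, f e = ∑ i : Fin g, ∑ j : Fin 2, f ⟨i, j⟩ := Fintype.sum_sigma _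
  rw [h]
  simp only [Fin.sum_univ_two]

lemma rh_sumV (g : ℕ) (f : (RH g).V → ℤ) :
    ∑ v, f v = f (rc g) + ∑ i : Fin g, f (ru g i) := by
  have h : ∑ v, f v = ∑ i : Unit, f (Sum.inl i) + ∑ i : (Σ _ : Fin g, Fin 1), f (Sum.inr i) :=
    Fintype.sum_sum_type _
  rw [h, Fintype.sum_sigma]
  simp [rc, ru]
  rfl

lemma rh_cases (g : ℕ) (v : (RH g).V) : v = rc g ∨ ∃ i, v = ru g i := by
  rcases v with ⟨⟩ | ⟨i, j⟩
  · exact Or.inl rfl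
  · right
    refine ⟨i, ?_⟩
    have : j = (0 : Fin 1) := Subsingleton.elim (α := Fin 1) _ _
    subst this
    rfl

lemma rc_ne (g : ℕ) (i : Fin g) : rc g ≠ ru g i := fun h => Sum.inl_ne_inr h
lemma ru_ne (g : ℕ) (i : Fin g) : ru g i ≠ rc g := fun h => Sum.inr_ne_inl h
lemma ru_inj (g : ℕ) (i j : Fin g) : ru g i = ru g j ↔ i = j := by
  constructor
  · intro h
    have := Sum.inr.inj h
    exact (Sigma.mk.inj this).1
  · rintro rfl; rfl

lemma inter_cc (g : ℕ) : (RH g).inter (rc g) (rc g) = -2 * g := by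
  simp [inter, valency, numLoops, Finset.card_filter, rh_sumE, rh_ends0, rh_ends1, ru_ne,
    -Finset.sum_boole]
  ring
lemma inter_cu (g : ℕ) (i : Fin g) : (RH g).inter (rc g) (ru g i) = 2 := by
  simp [inter, numEdges, Finset.card_filter, rh_sumE, rh_ends0, rh_ends1, ru_ne, rc_ne, ru_inj,
    Finset.sum_add_distrib, -Finset.sum_boole]
lemma inter_uc (g : ℕ) (i : Fin g) : (RH g).inter (ru g i) (rc g) = 2 := by
  simp [inter, numEdges, Finset.card_filter, rh_sumE, rh_ends0, rh_ends1, ru_ne, rc_ne, ru_inj,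
    Finset.sum_add_distrib, -Finset.sum_boole]
lemma inter_uu (g : ℕ) (i j : Fin g) :
    (RH g).inter (ru g i) (ru g j) = if i = j then -2 else 0 := by
  simp [inter, numEdges, numLoops, valency, Finset.card_filter, rh_sumE, rh_ends0, rh_ends1,
    ru_ne, rc_ne, ru_inj, Finset.sum_add_distrib, -Finset.sum_boole]

lemma mem_prin (g : ℕ) (D : (RH g).V → ℤ) :
    D ∈ (RH g).Prin ↔ D (rc g) + ∑ i, D (ru g i) = 0 ∧ ∀ i, (2 : ℤ) ∣ D (ru g i) := by
  constructor
  · intro h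
    induction h using AddSubgroup.closure_induction with
    | mem x hx =>
      obtain ⟨v, rfl⟩ := hx
      rcases rh_cases g v with rfl | ⟨i, rfl⟩
      · simp only [T, inter_cc, inter_cu]
        refine ⟨?_, fun _ => dvd_rfl⟩
        simp; ring
      · simp only [T, inter_uc, inter_uu]
        refine ⟨by simp, fun j => ?_⟩
        split_ifs <;> simp
    | zero => simp
    | add x y _ _ hx hy =>
      refine ⟨?_, fun i => dvd_add (hx.2 i) (hy.2 i)⟩
      simp only [Pi.add_apply, Finset.sum_add_distrib]
      linarith [hx.1, hy.1]
    | neg x _ hx =>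
      refine ⟨?_, fun i => (dvd_neg).2 (hx.2 i)⟩
      simp only [Pi.neg_apply, Finset.sum_neg_distrib]
      linarith [hx.1]
  · rintro ⟨h0, h2⟩
    choose k hk using h2
    have : D = ∑ i, (-(k i)) • (RH g).T (ru g i) := by
      funext v
      rcases rh_cases g v with rfl | ⟨j, rfl⟩
      · simp only [hk, ← Finset.mul_sum] at h0
        simp [Finset.sum_apply, T, inter_uc, ← Finset.sum_mul]
        linarith
      · simp [Finset.sum_apply, T, inter_uu, hk]
        ring
    rw [this]
    exact sum_mem fun i _ => zsmul_mem (AddSubgroup.subset_closure (Set.mem_range_self _)) _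

lemma rh_eff (g : ℕ) (D : (RH g).V → ℤ) :
    Effective D ↔ 0 ≤ D (rc g) ∧ ∀ i, 0 ≤ D (ru g i) := by
  constructor
  · exact fun h => ⟨h _, fun _ => h _⟩
  · intro h v
    rcases rh_cases g v with rfl | ⟨i, rfl⟩
    exacts [h.1, h.2 i]

/-- Divisors from coordinates. -/
def mkD (g : ℕ) (a : ℤ) (f : Fin g → ℤ) : (RH g).V → ℤ := Sum.elim (fun _ => a) fun p => f p.1
lemma mkD_c (g : ℕ) (a : ℤ) (f : Fin g → ℤ) : mkD g a f (rc g) = a := by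
  unfold rc; rfl
lemma mkD_u (g : ℕ) (a : ℤ) (f : Fin g → ℤ) (i : Fin g) : mkD g a f (ru g i) = f i := by
  unfold ru; rfl

lemma rose_count (g m : ℕ) (h : m ≤ g) :
    ∑ i : Fin g, (if (i : ℕ) < m then (1 : ℤ) else 0) = m := by
  rw [Fin.sum_univ_eq_sum_range (fun i => if i < m then (1 : ℤ) else 0) g]
  rw [← Finset.sum_filter]
  have : (Finset.range g).filter (fun i => i < m) = Finset.range m := by
    ext i; simp; omega
  rw [this]; simp

lemma rank_rh (g d : ℕ) (hd : d ≤ 2 * g) :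
    (RH g).rank (mkD g d 0) = ((d / 2 : ℕ) : ℤ) := by
  unfold rank
  apply IsGreatest.csSup_eq
  constructor
  · right
    refine ⟨by positivity, fun E hE hdeg => ?_⟩
    rw [rh_eff] at hE
    rw [degree, rh_sumV] at hdeg
    have hle : ∑ i, E (ru g i) % 2 ≤ ∑ i, E (ru g i) :=
      Finset.sum_le_sum fun i _ => by have := hE.2 i; omega
    refine ⟨mkD g (d - (d / 2 : ℕ) - ∑ i, E (ru g i) % 2) (fun i => E (ru g i) % 2), ?_, ?_⟩
    · rw [rh_eff]
      simp only [mkD_c, mkD_u]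
      refine ⟨?_, fun i => by omega⟩
      have := hE.1
      omega
    · rw [mem_prin]
      simp only [Pi.sub_apply, mkD_c, mkD_u, Finset.sum_sub_distrib, Pi.zero_apply]
      refine ⟨?_, fun i => by omega⟩
      simp only [Finset.sum_const_zero]
      linarith
  · rintro r (rfl | ⟨hr, h⟩)
    · omega
    · by_contra! hlt
      lift r to ℕ using hr
      obtain ⟨F, hF, hP⟩ := h (mkD g (r - (min r g : ℕ)) fun i => if (i : ℕ) < min r g then 1 else 0)
        (by
          rw [rh_eff]
          simp only [mkD_c, mkD_u]
          refine ⟨by omega, fun i => by split_ifs <;> simp⟩)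
        (by
          rw [degree, rh_sumV]
          simp only [mkD_c, mkD_u]
          rw [rose_count g _ (min_le_right _ _)]
          ring)
      rw [rh_eff] at hF
      rw [mem_prin] at hP
      simp only [Pi.sub_apply, mkD_c, mkD_u, Finset.sum_sub_distrib, Pi.zero_apply] at hP
      rw [rose_count g _ (min_le_right _ _)] at hP
      obtain ⟨h0, h2⟩ := hP
      have hle : ∑ i : Fin g, (if (i : ℕ) < min r g then (1 : ℤ) else 0) ≤ ∑ i, F (ru g i) := by
        refine Finset.sum_le_sum fun i _ => ?_
        have a := h2 i
        have b := hF.2 i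
        split_ifs at a ⊢ <;> omega
      rw [rose_count g _ (min_le_right _ _)] at hle
      simp only [Finset.sum_const_zero] at h0
      have := hF.1
      omega

lemma rankSharp_rose (g : ℕ) (n : Fin g → ℕ) (hn : n = fun _ => 1) (d : ℕ) :
    ((rose g).subdivide n).rank ((rose g).subdivMap n (fun _ => (d : ℤ)))
      = (RH g).rank (mkD g d 0) := by
  subst hn
  congr 1

end Multigraph

open Multigraph in
/-- For `g ≥ 1` and `0 ≤ d ≤ 2g`, the divisor `d·v` on the rose
`R_g` with one vertex `v` and `g` loops has `r#_{R_g}(d·v) = ⌊d/2⌋`. -/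
theorem rank_rose (g d : ℕ) (hg : 1 ≤ g) (hd : d ≤ 2 * g) :
    (Multigraph.rose g).rankSharp (fun _ => (d : ℤ)) = ((d / 2 : ℕ) : ℤ) := by
  rw [← rank_rh g d hd]
  exact rankSharp_rose g _ (by funext i; exact if_pos rfl) d
end

section
/- (Riemann–Roch for weighted graphs) Let (G, ω) be a weighted graph, i.e., a finite connected multigraph G together with a weight function ω: V(G) → ℤ_{≥0}, of genus g = b₁(G) + Σ_{v} ω(v). Then for every D ∈ Div(G, ω): r_{(G,ω)}(D) − r_{(G,ω)}(K_{(G,ω)} − D) = deg D − g + 1. -/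
namespace BNRR

set_option linter.unusedSectionVars false

variable {V : Type} [Fintype V] [DecidableEq V]

def lap (a : V → V → ℤ) (f : V → ℤ) (v : V) : ℤ := ∑ w, a v w * (f v - f w)

def Win (a : V → V → ℤ) (D : V → ℤ) : Prop := ∃ f : V → ℤ, ∀ v, 0 ≤ D v - lap a f v

def nu (a : V → V → ℤ) (p : V → ℤ) (v : V) : ℤ := (∑ w, if p w < p v then a v w else 0) - 1

def ind (A : Finset V) (v : V) : ℤ := if v ∈ A then 1 else 0

lemma lap_add (a : V → V → ℤ) (f g : V → ℤ) (v : V) :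
    lap a (fun v => f v + g v) v = lap a f v + lap a g v := by
  unfold lap
  rw [← Finset.sum_add_distrib]
  exact Finset.sum_congr rfl fun w _ => by ring

lemma lap_smul (a : V → V → ℤ) (c : ℤ) (f : V → ℤ) (v : V) :
    lap a (fun v => c * f v) v = c * lap a f v := by
  unfold lap
  rw [Finset.mul_sum]
  exact Finset.sum_congr rfl fun w _ => by ring

lemma lap_neg (a : V → V → ℤ) (f : V → ℤ) (v : V) :
    lap a (fun v => - f v) v = - lap a f v := by
  unfold lap
  rw [← Finset.sum_neg_distrib]
  exact Finset.sum_congr rfl fun w _ => by ring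

lemma lap_shift (a : V → V → ℤ) (f : V → ℤ) (c : ℤ) (v : V) :
    lap a (fun v => f v + c) v = lap a f v := by
  unfold lap
  exact Finset.sum_congr rfl fun w _ => by ring

lemma lap_symm (a : V → V → ℤ) (hs : ∀ v w, a v w = a w v) (f g : V → ℤ) :
    ∑ v, g v * lap a f v = ∑ v, f v * lap a g v := by
  have key : ∀ f g : V → ℤ, ∑ v, g v * lap a f v =
      ∑ v, ∑ w, a v w * (g v * f v) - ∑ v, ∑ w, a v w * (g v * f w) := by
    intro f g
    rw [← Finset.sum_sub_distrib]
    refine Finset.sum_congr rfl fun v _ => ?_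
    unfold lap
    rw [← Finset.sum_sub_distrib, Finset.mul_sum]
    exact Finset.sum_congr rfl fun w _ => by ring
  rw [key, key]
  congr 1
  · exact Finset.sum_congr rfl fun v _ => Finset.sum_congr rfl fun w _ => by ring
  · rw [Finset.sum_comm]
    exact Finset.sum_congr rfl fun v _ => Finset.sum_congr rfl fun w _ => by
      rw [hs]; ring

lemma sum_lap (a : V → V → ℤ) (hs : ∀ v w, a v w = a w v) (f : V → ℤ) :
    ∑ v, lap a f v = 0 := by
  have h := lap_symm a hs f (fun _ => 1)
  simp only [one_mul] at h
  rw [h]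
  simp [lap]

/-- nu is unwinnable -/
lemma nu_not_win [Nonempty V] (a : V → V → ℤ) (hn : ∀ v w, 0 ≤ a v w) (p : V → ℤ) :
    ¬ Win a (nu a p) := by
  rintro ⟨f, hf⟩
  obtain ⟨m, hm⟩ := Finite.exists_max f
  obtain ⟨v, hv, hmin⟩ := Finset.exists_min_image (Finset.univ.filter fun v => f v = f m) p
    ⟨m, by simp⟩
  simp only [Finset.mem_filter, Finset.mem_univ, true_and] at hv hmin
  have h := hf v
  have h2 : (∑ w, if p w < p v then a v w else 0) ≤ lap a f v := by
    unfold lap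
    refine Finset.sum_le_sum fun w _ => ?_
    have hw := hm w
    split_ifs with hlt
    · have : f w ≠ f m := fun e => by have := hmin w e; omega
      have h1 : 1 ≤ f v - f w := by omega
      nlinarith [hn v w]
    · exact mul_nonneg (hn v w) (by omega)
  unfold nu at h
  omega

lemma lap_ind_mem (a : V → V → ℤ) (A : Finset V) (v : V) (hv : v ∈ A) :
    lap a (ind A) v = ∑ w, if w ∈ A then 0 else a v w := by
  unfold lap ind
  refine Finset.sum_congr rfl fun w _ => ?_
  split_ifs <;> simp

lemma lap_ind_not_mem (a : V → V → ℤ) (A : Finset V) (v : V) (hv : v ∉ A) :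
    lap a (ind A) v = - ∑ w, if w ∈ A then a v w else 0 := by
  unfold lap ind
  rw [← Finset.sum_neg_distrib]
  refine Finset.sum_congr rfl fun w _ => ?_
  split_ifs <;> simp

lemma finset_grow (P : Finset V → Prop) (q : V) (h0 : P {q})
    (hstep : ∀ A, q ∈ A → P A → A ≠ Finset.univ → ∃ v ∉ A, P (insert v A)) :
    P Finset.univ := by
  classical
  obtain ⟨A, hA, hmax⟩ := Finset.exists_max_image
    (Finset.univ.filter fun A : Finset V => q ∈ A ∧ P A) Finset.card ⟨{q}, by simpa using h0⟩
  simp only [Finset.mem_filter, Finset.mem_univ, true_and] at hA hmax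
  by_contra hcon
  have hne : A ≠ Finset.univ := fun e => hcon (e ▸ hA.2)
  obtain ⟨v, hv, hP⟩ := hstep A hA.1 hA.2 hne
  have := hmax _ ⟨Finset.mem_insert_of_mem hA.1, hP⟩
  rw [Finset.card_insert_of_notMem hv] at this
  omega

lemma exists_nonneg_off (a : V → V → ℤ) (hs : ∀ v w, a v w = a w v) (hn : ∀ v w, 0 ≤ a v w)
    (hc : ∀ A : Finset V, A.Nonempty → A ≠ Finset.univ → ∃ u ∈ A, ∃ v ∉ A, 0 < a u v)
    (q : V) (D : V → ℤ) : ∃ f : V → ℤ, ∀ v, v ≠ q → 0 ≤ D v - lap a f v := by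
  have := finset_grow (fun A => ∀ D : V → ℤ, (∀ v, v ∉ A → 0 ≤ D v) →
    ∃ f : V → ℤ, ∀ v, v ≠ q → 0 ≤ D v - lap a f v) q ?_ ?_
  · exact this D (by simp)
  · intro D hD
    refine ⟨fun _ => 0, fun v hv => ?_⟩
    simpa [lap] using hD v (by simpa using hv)
  · intro A hqA hP hA
    obtain ⟨u, hu, v, hv, huv⟩ := hc A ⟨q, hqA⟩ hA
    refine ⟨v, hv, fun D hD => ?_⟩
    have hnn : ∀ x, x ∉ A → 0 ≤ D x - lap a (fun y => |D v| * ind A y) x := by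
      intro x hx
      rw [lap_smul, lap_ind_not_mem a A x hx]
      have hge : 0 ≤ ∑ w, if w ∈ A then a x w else 0 :=
        Finset.sum_nonneg fun w _ => by split_ifs <;> simp [hn]
      by_cases hxv : x = v
      · subst hxv
        have h1 : a x u ≤ ∑ w, if w ∈ A then a x w else 0 := by
          have := Finset.single_le_sum (f := fun w => if w ∈ A then a x w else 0)
            (fun w _ => by split_ifs <;> simp [hn]) (Finset.mem_univ u)
          simpa [hu] using this
        rw [hs] at h1
        have h2 : 1 ≤ ∑ w, if w ∈ A then a x w else 0 := by omega
        nlinarith [neg_abs_le (D x), abs_nonneg (D x)]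
      · have := hD x (by simp [hx, hxv])
        nlinarith [abs_nonneg (D v)]
    obtain ⟨f, hf⟩ := hP (fun x => D x - lap a (fun y => |D v| * ind A y) x) hnn
    refine ⟨fun x => |D v| * ind A x + f x, fun x hx => ?_⟩
    have := hf x hx
    rw [lap_add]
    linarith

lemma exists_reduced (a : V → V → ℤ) (hs : ∀ v w, a v w = a w v) (hn : ∀ v w, 0 ≤ a v w)
    (hc : ∀ A : Finset V, A.Nonempty → A ≠ Finset.univ → ∃ u ∈ A, ∃ v ∉ A, 0 < a u v)
    (q : V) (D : V → ℤ) : ∃ f : V → ℤ, (∀ v, v ≠ q → 0 ≤ D v - lap a f v) ∧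
      ∀ A : Finset V, q ∈ A → A ≠ Finset.univ →
        ∃ v ∉ A, D v - lap a f v < ∑ w, if w ∈ A then a v w else 0 := by
  obtain ⟨f0, hf0⟩ := exists_nonneg_off a hs hn hc q D
  obtain ⟨g0, hg0⟩ := exists_nonneg_off a hs hn hc q (fun _ => -1)
  -- g with lap g ≥ 1 off q and g ≥ 0
  obtain ⟨g, hg1, hg2⟩ : ∃ g : V → ℤ, (∀ v, 0 ≤ g v) ∧ ∀ v, v ≠ q → 1 ≤ lap a g v := by
    have : Nonempty V := ⟨q⟩
    obtain ⟨m, hm⟩ := Finite.exists_max g0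
    refine ⟨fun v => - g0 v + g0 m, fun v => by have := hm v; dsimp only; omega, fun v hv => ?_⟩
    rw [lap_shift a (fun v => - g0 v), lap_neg]
    have := hg0 v hv
    omega
  set D0 : V → ℤ := fun v => D v - lap a f0 v with hD0
  set P : ℤ → Prop := fun s => ∃ f : V → ℤ, (∀ v, 0 ≤ f v) ∧ f q = 0 ∧
    (∀ v, v ≠ q → 0 ≤ D0 v - lap a f v) ∧ ∑ v, f v = s with hP
  have hbdd : ∃ b : ℤ, ∀ z, P z → z ≤ b := by
    refine ⟨∑ v, g v * |D0 v|, ?_⟩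
    rintro z ⟨f, hf1, hf2, hf3, rfl⟩
    calc ∑ v, f v ≤ ∑ v, f v * lap a g v := by
          refine Finset.sum_le_sum fun v _ => ?_
          by_cases hv : v = q
          · subst hv; simp [hf2]
          · nlinarith [hg2 v hv, hf1 v]
      _ = ∑ v, g v * lap a f v := (lap_symm a hs g f)
      _ ≤ ∑ v, g v * |D0 v| := by
          refine Finset.sum_le_sum fun v _ => mul_le_mul_of_nonneg_left ?_ (hg1 v)
          by_cases hv : v = q
          · subst hv
            have : lap a f v ≤ 0 := by
              unfold lap
              refine Finset.sum_nonpos fun w _ => ?_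
              rw [hf2]
              nlinarith [hn v w, hf1 w]
            exact this.trans (abs_nonneg _)
          · have := hf3 v hv
            have := le_abs_self (D0 v)
            omega
  obtain ⟨z, ⟨f, hf1, hf2, hf3, hfz⟩, hzmax⟩ := Int.exists_greatest_of_bdd hbdd
    ⟨0, fun _ => 0, by simp, rfl, fun v hv => by
      have := hf0 v hv
      simp only [hD0]
      have h0 : lap a (fun _ => 0) v = 0 := by simp [lap]
      omega, by simp⟩
  refine ⟨fun v => f0 v + f v, fun v hv => ?_, fun A hqA hA => ?_⟩
  · have := hf3 v hv
    rw [lap_add]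
    simp only [hD0] at this
    omega
  · by_contra hcon
    push Not at hcon
    have hnn : ∀ v, v ≠ q → 0 ≤ D0 v - lap a (fun v => f v + ind Aᶜ v) v := by
      intro v hv
      rw [lap_add]
      by_cases hvA : v ∈ A
      · rw [lap_ind_not_mem a Aᶜ v (by simpa using hvA)]
        have := hf3 v hv
        have hge : 0 ≤ ∑ w, if w ∈ Aᶜ then a v w else 0 :=
          Finset.sum_nonneg fun w _ => by split_ifs <;> simp [hn]
        omega
      · rw [lap_ind_mem a Aᶜ v (by simpa using hvA)]
        have h1 := hcon v hvA
        rw [lap_add] at h1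
        have h2 : (∑ w, if w ∈ Aᶜ then 0 else a v w) = ∑ w, if w ∈ A then a v w else 0 :=
          Finset.sum_congr rfl fun w _ => by by_cases h : w ∈ A <;> simp [h]
        rw [h2]
        simp only [hD0]
        omega
    have := hzmax _ ⟨fun v => f v + ind Aᶜ v, fun v => by
      have := hf1 v
      dsimp only [ind]
      split_ifs <;> omega, by simp [ind, hf2, hqA], hnn, rfl⟩
    rw [Finset.sum_add_distrib, hfz] at this
    obtain ⟨v, hv⟩ : ∃ v, v ∉ A := by
      by_contra h
      push Not at h
      exact hA (Finset.eq_univ_iff_forall.2 h)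
    have hpos : 0 < ∑ v, ind Aᶜ v := by
      refine Finset.sum_pos' (fun v _ => by unfold ind; split_ifs <;> simp) ⟨v, by simp, ?_⟩
      simp [ind, hv]
    omega

lemma win_or_nu (a : V → V → ℤ) (hs : ∀ v w, a v w = a w v) (hn : ∀ v w, 0 ≤ a v w)
    (hc : ∀ A : Finset V, A.Nonempty → A ≠ Finset.univ → ∃ u ∈ A, ∃ v ∉ A, 0 < a u v)
    [Nonempty V] (D : V → ℤ) (hD : ¬ Win a D) :
    ∃ p : V → ℤ, Function.Injective p ∧ Win a (fun v => nu a p v - D v) := by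
  obtain ⟨q⟩ := ‹Nonempty V›
  obtain ⟨f, hf1, hf2⟩ := exists_reduced a hs hn hc q D
  have hq : D q - lap a f q < 0 := by
    by_contra h
    push Not at h
    refine hD ⟨f, fun v => ?_⟩
    by_cases hv : v = q
    · subst hv; exact h
    · exact hf1 v hv
  have := finset_grow (fun A => ∃ p : V → ℤ, Set.InjOn p A ∧
    ∀ v ∈ A, D v - lap a f v ≤ (∑ w, if w ∈ A ∧ p w < p v then a v w else 0) - 1) q ?_ ?_
  · obtain ⟨p, hp, hle⟩ := this
    refine ⟨p, by simpa [Set.injOn_univ] using hp, fun v => - f v, fun v => ?_⟩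
    have := hle v (Finset.mem_univ v)
    simp only [Finset.mem_univ, true_and] at this
    rw [lap_neg]
    dsimp only [nu]
    omega
  · refine ⟨fun _ => 0, by simp, ?_⟩
    intro v hv
    rw [Finset.mem_singleton] at hv
    subst hv
    simp
    omega
  · rintro A hqA ⟨p, hp, hle⟩ hA
    obtain ⟨v, hv, hlt⟩ := hf2 A hqA hA
    obtain ⟨m, hm, hmax⟩ := Finset.exists_max_image A p ⟨q, hqA⟩
    have hne : ∀ w ∈ A, w ≠ v := fun w hw e => hv (e ▸ hw)
    refine ⟨v, hv, Function.update p v (p m + 1), ?_, ?_⟩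
    · intro x hx y hy hxy
      simp only [Finset.coe_insert, Set.mem_insert_iff, Finset.mem_coe] at hx hy
      rcases hx with rfl | hx <;> rcases hy with rfl | hy
      · rfl
      · rw [Function.update_self, Function.update_of_ne (hne y hy)] at hxy
        have := hmax y hy
        omega
      · rw [Function.update_self, Function.update_of_ne (hne x hx)] at hxy
        have := hmax x hx
        omega
      · rw [Function.update_of_ne (hne x hx), Function.update_of_ne (hne y hy)] at hxy
        exact hp hx hy hxy
    · intro x hx
      rw [Finset.mem_insert] at hx
      rcases hx with rfl | hx
      · refine (Int.le_sub_one_of_lt hlt).trans (sub_le_sub_right (Finset.sum_le_sum fun w _ => ?_) 1)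
        by_cases hw : w ∈ A
        · have := hmax w hw
          rw [if_pos hw, if_pos]
          refine ⟨Finset.mem_insert_of_mem hw, ?_⟩
          rw [Function.update_self, Function.update_of_ne (hne w hw)]
          omega
        · rw [if_neg hw]
          split_ifs <;> simp [hn]
      · refine (hle x hx).trans (sub_le_sub_right (Finset.sum_le_sum fun w _ => ?_) 1)
        by_cases hw : w ∈ A ∧ p w < p x
        · rw [if_pos hw, if_pos]
          refine ⟨Finset.mem_insert_of_mem hw.1, ?_⟩
          rw [Function.update_of_ne (hne x hx), Function.update_of_ne (hne w hw.1)]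
          exact hw.2
        · rw [if_neg hw]
          split_ifs <;> simp [hn]

def can (a : V → V → ℤ) (v : V) : ℤ := (∑ w, a v w) - 2

lemma nu_rev (a : V → V → ℤ) (h0 : ∀ v, a v v = 0) (p : V → ℤ) (hp : Function.Injective p)
    (v : V) : nu a (fun v => - p v) v = can a v - nu a p v := by
  dsimp only [nu, can]
  have : ∑ w, a v w = (∑ w, if p w < p v then a v w else 0) +
      ∑ w, if - p w < - p v then a v w else 0 := by
    rw [← Finset.sum_add_distrib]
    refine Finset.sum_congr rfl fun w _ => ?_
    rcases lt_trichotomy (p w) (p v) with h | h | h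
    · rw [if_pos h, if_neg (by omega)]; simp
    · have := hp h
      subst this
      simp [h0]
    · rw [if_neg (by omega), if_pos (by omega)]; simp
  omega

lemma deg_nu_rev (a : V → V → ℤ) (hs : ∀ v w, a v w = a w v) (p : V → ℤ) :
    ∑ v, nu a (fun v => - p v) v = ∑ v, nu a p v := by
  unfold nu
  rw [Finset.sum_sub_distrib, Finset.sum_sub_distrib, Finset.sum_comm]
  congr 1
  refine Finset.sum_congr rfl fun v _ => Finset.sum_congr rfl fun w _ => ?_
  simp [hs w v]

def IsH (a : V → V → ℤ) (D : V → ℤ) (h : ℤ) : Prop :=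
  (∃ E : V → ℤ, (∀ v, 0 ≤ E v) ∧ ∑ v, E v = h ∧ ¬ Win a (fun v => D v - E v)) ∧
  ∀ E : V → ℤ, (∀ v, 0 ≤ E v) → ¬ Win a (fun v => D v - E v) → h ≤ ∑ v, E v

lemma exists_isH [Nonempty V] (a : V → V → ℤ) (hs : ∀ v w, a v w = a w v) (D : V → ℤ) :
    ∃ h, IsH a D h := by
  obtain ⟨z, ⟨E, h1, h2, h3⟩, hz⟩ := Int.exists_least_of_bdd
    (P := fun h => ∃ E : V → ℤ, (∀ v, 0 ≤ E v) ∧ ∑ v, E v = h ∧ ¬ Win a (fun v => D v - E v))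
    ⟨0, by rintro z ⟨E, hE, rfl, -⟩; exact Finset.sum_nonneg fun v _ => hE v⟩
    ⟨_, fun v => |D v| + 1, fun v => by positivity, rfl, by
      rintro ⟨f, hf⟩
      obtain ⟨q⟩ := ‹Nonempty V›
      have h1 : 0 ≤ ∑ v, ((D v - (|D v| + 1)) - lap a f v) := Finset.sum_nonneg fun v _ => hf v
      rw [Finset.sum_sub_distrib, sum_lap a hs] at h1
      have h2 : ∑ v, (D v - (|D v| + 1)) < 0 :=
        Finset.sum_neg (fun v _ => by have := le_abs_self (D v); omega) ⟨q, by simp⟩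
      omega⟩
  exact ⟨z, ⟨E, h1, h2, h3⟩, fun E hE hw => hz _ ⟨E, hE, rfl, hw⟩⟩

lemma h_le (a : V → V → ℤ) (hs : ∀ v w, a v w = a w v) (hn : ∀ v w, 0 ≤ a v w)
    (h0 : ∀ v, a v v = 0)
    (hc : ∀ A : Finset V, A.Nonempty → A ≠ Finset.univ → ∃ u ∈ A, ∃ v ∉ A, 0 < a u v)
    [Nonempty V] (D : V → ℤ) (γ : ℤ) (hγ : 2 * γ = ∑ v, can a v) (h h' : ℤ)
    (hh : IsH a D h) (hh' : IsH a (fun v => can a v - D v) h') :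
    h' ≤ h + γ - ∑ v, D v := by
  obtain ⟨⟨E, hE, hEd, hEw⟩, -⟩ := hh
  obtain ⟨p, hp, f, hf⟩ := win_or_nu a hs hn hc _ hEw
  have hdeg : ∑ v, nu a p v = γ := by
    have h1 : ∑ v, nu a (fun v => - p v) v = ∑ v, (can a v - nu a p v) :=
      Finset.sum_congr rfl fun v _ => nu_rev a h0 p hp v
    rw [deg_nu_rev a hs, Finset.sum_sub_distrib] at h1
    omega
  have := hh'.2 _ hf ?_
  · simp only [Finset.sum_sub_distrib, sum_lap a hs, hdeg, hEd] at this
    omega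
  · rintro ⟨g, hg⟩
    refine nu_not_win a hn (fun v => - p v) ⟨fun v => g v + - f v, fun v => ?_⟩
    rw [lap_add, lap_neg, nu_rev a h0 p hp]
    have h1 := hg v
    have := hE v
    dsimp only at h1
    omega

theorem rr (a : V → V → ℤ) (hs : ∀ v w, a v w = a w v) (hn : ∀ v w, 0 ≤ a v w)
    (h0 : ∀ v, a v v = 0)
    (hc : ∀ A : Finset V, A.Nonempty → A ≠ Finset.univ → ∃ u ∈ A, ∃ v ∉ A, 0 < a u v)
    [Nonempty V] (D : V → ℤ) (γ : ℤ) (hγ : 2 * γ = ∑ v, can a v) (h h' : ℤ)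
    (hh : IsH a D h) (hh' : IsH a (fun v => can a v - D v) h') :
    h - h' = ∑ v, D v - γ := by
  have h1 := h_le a hs hn h0 hc D γ hγ h h' hh hh'
  have h2 := h_le a hs hn h0 hc (fun v => can a v - D v) γ hγ h' h hh' (by simpa using hh)
  rw [Finset.sum_sub_distrib] at h2
  omega

end BNRR

namespace Multigraph

/-- loop-free adjacency numbers -/
def adjn (H : Multigraph) (v w : H.V) : ℤ := if v = w then 0 else (H.numEdges v w : ℤ)

lemma adjn_symm (H : Multigraph) (v w : H.V) : H.adjn v w = H.adjn w v := by
  unfold adjn numEdges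
  by_cases h : v = w
  · simp [h]
  · rw [if_neg h, if_neg (Ne.symm h)]
    congr 2
    ext e
    simp [or_comm]

lemma sum_adjn (H : Multigraph) (v : H.V) :
    ∑ w, H.adjn v w = (H.valency v : ℤ) - 2 * (H.numLoops v : ℤ) := by
  have h1 : ∀ w, H.adjn v w = ∑ e : H.E,
      if v ≠ w ∧ (H.ends e = (v, w) ∨ H.ends e = (w, v)) then 1 else 0 := by
    intro w
    unfold adjn numEdges
    by_cases h : v = w
    · simp [h]
    · simp [h]
  simp_rw [h1]
  unfold valency numLoops
  rw [Finset.sum_comm, Finset.card_filter]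
  push_cast
  rw [Finset.mul_sum, ← Finset.sum_sub_distrib]
  refine Finset.sum_congr rfl fun e _ => ?_
  obtain ⟨x, y⟩ := H.ends e
  simp only [Prod.mk.injEq]
  by_cases hx : x = v <;> by_cases hy : y = v
  · subst hx; subst hy
    simp
  · subst hx
    rw [Finset.sum_eq_single y]
    · simp [hy, Ne.symm hy]
    · intro b _ hb
      simp [Ne.symm hb, hy]
    · simp
  · subst hy
    rw [Finset.sum_eq_single x]
    · simp [hx, Ne.symm hx]
    · intro b _ hb
      simp [Ne.symm hb, hx]
    · simp
  · simp [hx, hy]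

lemma T_eq (H : Multigraph) (v : H.V) :
    H.T v = fun w => - BNRR.lap H.adjn (Pi.single v 1) w := by
  funext w
  unfold T inter BNRR.lap
  by_cases h : v = w
  · subst h
    rw [if_pos rfl]
    have : ∑ w, H.adjn v w * ((Pi.single v 1 : H.V → ℤ) v - (Pi.single v 1 : H.V → ℤ) w)
        = ∑ w, H.adjn v w := by
      refine Finset.sum_congr rfl fun w _ => ?_
      by_cases h : w = v
      · subst h; simp [adjn]
      · simp [h]
    rw [this, sum_adjn]
    ring
  · rw [if_neg h, Finset.sum_eq_single v]
    · rw [adjn_symm]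
      simp [adjn, h, Pi.single_apply, Ne.symm h]
    · intro b _ hb
      simp [hb, Ne.symm h]
    · simp

lemma mem_Prin_s11 (H : Multigraph) (D : H.V → ℤ) :
    D ∈ H.Prin ↔ ∃ f : H.V → ℤ, ∀ v, D v = BNRR.lap H.adjn f v := by
  constructor
  · intro h
    refine AddSubgroup.closure_induction (p := fun D _ => ∃ f : H.V → ℤ, ∀ v, D v = BNRR.lap H.adjn f v)
      ?_ ?_ ?_ ?_ h
    · rintro _ ⟨v, rfl⟩
      refine ⟨fun w => - (Pi.single v 1 : H.V → ℤ) w, fun w => ?_⟩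
      rw [BNRR.lap_neg, T_eq]
    · exact ⟨fun _ => 0, fun v => by simp [BNRR.lap]⟩
    · rintro x y _ _ ⟨f, hf⟩ ⟨g, hg⟩
      exact ⟨fun v => f v + g v, fun v => by rw [BNRR.lap_add, Pi.add_apply, hf, hg]⟩
    · rintro x _ ⟨f, hf⟩
      exact ⟨fun v => - f v, fun v => by rw [BNRR.lap_neg, Pi.neg_apply, hf]⟩
  · rintro ⟨f, hf⟩
    have : D = ∑ u, (- f u) • H.T u := by
      funext v
      rw [hf, Finset.sum_apply]
      have h1 : ∀ u, ((- f u) • H.T u) v = f u * BNRR.lap H.adjn (Pi.single u 1) v := by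
        intro u
        rw [T_eq]
        simp
      simp_rw [h1]
      unfold BNRR.lap
      simp_rw [Finset.mul_sum]
      rw [Finset.sum_comm]
      refine Finset.sum_congr rfl fun w _ => ?_
      simp only [mul_sub, Finset.sum_sub_distrib, Pi.single_apply]
      simp
      ring
    rw [this]
    exact AddSubgroup.sum_mem _ fun u _ => AddSubgroup.zsmul_mem _
      (AddSubgroup.subset_closure (Set.mem_range_self u)) _

lemma win_iff (H : Multigraph) (D : H.V → ℤ) :
    (∃ F : H.V → ℤ, Effective F ∧ D - F ∈ H.Prin) ↔ BNRR.Win H.adjn D := by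
  constructor
  · rintro ⟨F, hF, h⟩
    obtain ⟨f, hf⟩ := (H.mem_Prin_s11 _).1 h
    refine ⟨f, fun v => ?_⟩
    have := hf v
    have := hF v
    simp only [Pi.sub_apply] at *
    omega
  · rintro ⟨f, hf⟩
    refine ⟨fun v => D v - BNRR.lap H.adjn f v, hf, (H.mem_Prin_s11 _).2 ?_⟩
    exact ⟨f, fun v => by simp⟩

lemma rank_eq (H : Multigraph) [Nonempty H.V] (D : H.V → ℤ) (h : ℤ)
    (hh : BNRR.IsH H.adjn D h) : H.rank D = h - 1 := by
  obtain ⟨⟨E0, hE0, hd, hw⟩, hmin⟩ := hh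
  have hnn : 0 ≤ h := hd ▸ Finset.sum_nonneg fun v _ => hE0 v
  refine IsGreatest.csSup_eq ⟨?_, ?_⟩
  · by_cases hz : h = 0
    · left; omega
    · right
      refine ⟨by omega, fun E hE hdE => ?_⟩
      rw [win_iff]
      by_contra hcon
      have := hmin E hE hcon
      unfold degree at hdE
      omega
  · rintro r (rfl | ⟨hr, hall⟩)
    · omega
    · by_contra hcon
      obtain ⟨q⟩ := ‹Nonempty H.V›
      have := hall (fun v => E0 v + (Pi.single q (r - h) : H.V → ℤ) v) ?_ ?_
      · rw [win_iff] at this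
        obtain ⟨f, hf⟩ := this
        refine hw ⟨f, fun v => ?_⟩
        have h1 := hf v
        have h2 : 0 ≤ (Pi.single q (r - h) : H.V → ℤ) v := by
          rw [Pi.single_apply]; split_ifs <;> omega
        simp only [Pi.sub_apply] at h1
        dsimp only
        omega
      · intro v
        have h2 : 0 ≤ (Pi.single q (r - h) : H.V → ℤ) v := by
          rw [Pi.single_apply]; split_ifs <;> omega
        have := hE0 v
        dsimp only
        omega
      · unfold degree
        rw [Finset.sum_add_distrib, hd]
        simp

lemma sum_valency_s11 (H : Multigraph) : ∑ v, (H.valency v : ℤ) = 2 * Fintype.card H.E := by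
  unfold valency
  push_cast
  rw [Finset.sum_comm]
  simp [Finset.sum_add_distrib]
  ring

theorem rr_loopless (H : Multigraph) (hl : H.Loopless) (hne : Nonempty H.V)
    (hc : ∀ v w : H.V, Relation.ReflTransGen H.Adj v w) (D K : H.V → ℤ)
    (hK : ∀ v, K v = H.valency v - 2) :
    H.rank D - H.rank (K - D) = degree D - H.genus + 1 := by
  have hloop : ∀ v, H.numLoops v = 0 := by
    intro v
    unfold numLoops
    rw [Finset.card_eq_zero, Finset.filter_eq_empty_iff]
    intro e _ he
    exact hl e (by rw [he])
  have hcan : ∀ v, BNRR.can H.adjn v = K v := by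
    intro v
    rw [BNRR.can, sum_adjn, hloop, hK]
    simp
  have hs := H.adjn_symm
  have hn : ∀ v w, 0 ≤ H.adjn v w := by
    intro v w; unfold adjn; split_ifs <;> simp
  have hconn : ∀ A : Finset H.V, A.Nonempty → A ≠ Finset.univ →
      ∃ u ∈ A, ∃ v ∉ A, 0 < H.adjn u v := by
    rintro A ⟨x, hx⟩ hA
    by_contra hcon
    push Not at hcon
    refine hA (Finset.eq_univ_iff_forall.2 fun y => ?_)
    induction hc x y with
    | refl => exact hx
    | tail _ hadj ih =>
      rename_i b c _
      by_contra hcA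
      have h1 := hcon b ih c hcA
      obtain ⟨e, he⟩ := hadj
      have hbc : b ≠ c := fun h => hcA (h ▸ ih)
      rw [adjn, if_neg hbc] at h1
      have : 0 < H.numEdges b c := Finset.card_pos.2 ⟨e, by simpa using he⟩
      omega
  obtain ⟨h, hh⟩ := BNRR.exists_isH H.adjn hs D
  obtain ⟨h', hh'⟩ := BNRR.exists_isH H.adjn hs (fun v => BNRR.can H.adjn v - D v)
  have key := BNRR.rr H.adjn hs hn (fun v => by simp [adjn]) hconn D (H.genus - 1) ?_ h h' hh hh'
  · have e : (fun v => BNRR.can H.adjn v - D v) = K - D := by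
      funext v; simp [hcan]
    rw [e] at hh'
    rw [rank_eq H D h hh, rank_eq H _ h' hh']
    unfold degree
    omega
  · simp_rw [hcan, hK]
    rw [Finset.sum_sub_distrib, sum_valency_s11]
    simp [genus]
    ring

/-- The number of inserted vertices. -/
abbrev hatn (G : Multigraph) : G.E → ℕ := fun e => if (G.ends e).1 = (G.ends e).2 then 1 else 0

lemma hat_loopless (G : Multigraph) : G.hat.Loopless := by
  rintro ⟨e, i⟩ h
  have hi := i.isLt
  simp only [hat, subdivide] at h
  by_cases hl : (G.ends e).1 = (G.ends e).2
  · simp only [hl, if_true] at h hi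
    by_cases h1 : (i : ℕ) = 0
    · rw [dif_pos h1, dif_neg (by omega)] at h
      cases h
    · rw [dif_neg h1, dif_pos (by omega)] at h
      cases h
  · simp only [hl, if_false] at h hi
    have : (i : ℕ) = 0 := by omega
    simp [this] at h
    exact hl h

lemma hat_connected (G : Multigraph) (hG : G.Connected) :
    ∀ v w : G.hat.V, Relation.ReflTransGen G.hat.Adj v w := by
  have hsymm : ∀ v w : G.hat.V, G.hat.Adj v w → G.hat.Adj w v := by
    rintro v w ⟨e, he⟩
    exact ⟨e, he.symm⟩
  have hsym2 : ∀ v w : G.hat.V, Relation.ReflTransGen G.hat.Adj v w →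
      Relation.ReflTransGen G.hat.Adj w v := by
    intro v w h
    induction h with
    | refl => exact .refl
    | tail _ h ih => exact Relation.ReflTransGen.head (hsymm _ _ h) ih
  have hE : ∀ e : G.E, Relation.ReflTransGen G.hat.Adj (Sum.inl (G.ends e).1) (Sum.inl (G.ends e).2) := by
    intro e
    by_cases hl : (G.ends e).1 = (G.ends e).2
    · rw [hl]; exact .refl
    · refine .single ⟨⟨e, ⟨0, by omega⟩⟩, Or.inl ?_⟩
      simp [hat, subdivide, hl]
  have hinl : ∀ v w : G.V, Relation.ReflTransGen G.hat.Adj (Sum.inl v) (Sum.inl w) := by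
    intro v w
    induction hG.2 v w with
    | refl => exact .refl
    | tail _ h ih =>
      obtain ⟨e, he | he⟩ := h
      · have := hE e
        rw [he] at this
        exact ih.trans this
      · have := hE e
        rw [he] at this
        exact ih.trans (hsym2 _ _ this)
  obtain ⟨q⟩ := hG.1
  have hall : ∀ v : G.hat.V, Relation.ReflTransGen G.hat.Adj (Sum.inl q) v := by
    rintro (v | ⟨e, i⟩)
    · exact hinl q v
    · refine (hinl q (G.ends e).1).tail ⟨⟨e, ⟨0, by omega⟩⟩, Or.inl ?_⟩
      have hi := i.isLt
      by_cases hl : (G.ends e).1 = (G.ends e).2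
      · have hi0 : (i : ℕ) = 0 := by simp only [hl, if_true] at hi; omega
        have : i = ⟨0, by omega⟩ := Fin.ext hi0
        rw [this]
        simp [hat, subdivide, hl]
      · simp [hl] at hi
  exact fun v w => (hsym2 _ _ (hall v)).trans (hall w)

lemma hat_genus (G : Multigraph) : G.hat.genus = G.genus := by
  have h1 : Fintype.card G.hat.E = ∑ e : G.E, (G.hatn e + 1) := by
    change Fintype.card (Σ e : G.E, Fin (G.hatn e + 1)) = _
    simp
  have h2 : Fintype.card G.hat.V = Fintype.card G.V + ∑ e : G.E, G.hatn e := by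
    change Fintype.card (G.V ⊕ (Σ e : G.E, Fin (G.hatn e))) = _
    simp
  unfold genus
  rw [h1, h2, Finset.sum_add_distrib]
  push_cast
  simp
  ring

lemma hat_valency_inl (G : Multigraph) (v : G.V) :
    G.hat.valency (Sum.inl v) = G.valency v := by
  unfold valency
  change (∑ e : (Σ e : G.E, Fin (G.hatn e + 1)), _) = _
  rw [Fintype.sum_sigma]
  refine Finset.sum_congr rfl fun e _ => ?_
  rw [Finset.sum_add_distrib]
  congr 1
  · rw [Finset.sum_eq_single ⟨0, by omega⟩]
    · simp [hat, subdivide]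
    · intro i _ hi
      have : (i : ℕ) ≠ 0 := fun h => hi (Fin.ext h)
      simp [hat, subdivide, this]
    · simp
  · rw [Finset.sum_eq_single ⟨G.hatn e, by omega⟩]
    · simp [hat, subdivide]
    · intro i _ hi
      have : (i : ℕ) ≠ G.hatn e := fun h => hi (Fin.ext h)
      simp only [hat, subdivide]
      rw [dif_neg this]
      simp
    · simp

lemma hat_valency_inr (G : Multigraph) (x : Σ e : G.E, Fin (G.hatn e)) :
    G.hat.valency (Sum.inr x) = 2 := by
  obtain ⟨e, i⟩ := x
  have hi := i.isLt
  unfold valency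
  change (∑ e : (Σ e : G.E, Fin (G.hatn e + 1)), _) = _
  rw [Fintype.sum_sigma, Finset.sum_eq_single e]
  · rw [Finset.sum_add_distrib]
    have h1 : ∀ n : ℕ, n = 1 + 1 ↔ n = 2 := by intro n; rfl
    rw [← one_add_one_eq_two]
    congr 1
    · rw [Finset.sum_eq_single ⟨i + 1, by omega⟩]
      · simp [hat, subdivide]
      · intro j _ hj
        simp only [hat, subdivide]
        by_cases h : (j : ℕ) = 0
        · rw [dif_pos h]; simp
        · rw [dif_neg h, if_neg]
          intro hh
          simp only [Sum.inr.injEq, Sigma.mk.injEq, heq_eq_eq, true_and, Fin.ext_iff] at hh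
          exact hj (Fin.ext (by simp only; omega))
      · simp
    · rw [Finset.sum_eq_single ⟨i, by omega⟩]
      · simp only [hat, subdivide]
        have : (i : ℕ) ≠ (if (G.ends e).1 = (G.ends e).2 then 1 else 0) := by
          have : (i : ℕ) ≠ G.hatn e := by omega
          exact this
        rw [dif_neg this]
        simp
      · intro j _ hj
        simp only [hat, subdivide]
        by_cases h : (j : ℕ) = G.hatn e
        · rw [dif_pos h]; simp
        · rw [dif_neg h, if_neg]
          intro hh
          simp only [Sum.inr.injEq, Sigma.mk.injEq, heq_eq_eq, true_and, Fin.ext_iff] at hh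
          exact hj (Fin.ext (by simp only; omega))
      · simp
  · intro e' _ he'
    refine Finset.sum_eq_zero fun j _ => ?_
    simp only [hat, subdivide]
    have h1 : ∀ (c : Prop) [Decidable c] (x : G.V) (k : ¬ c → Fin (G.hatn e')),
        (if h : c then Sum.inl x else Sum.inr ⟨e', k h⟩ : G.V ⊕ (Σ e : G.E, Fin (G.hatn e)))
          ≠ Sum.inr ⟨e, i⟩ := by
      intro c _ x k hh
      by_cases hc : c
      · rw [dif_pos hc] at hh
        cases hh
      · rw [dif_neg hc] at hh
        simp only [Sum.inr.injEq, Sigma.mk.injEq] at hh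
        exact he' hh.1
    rw [if_neg (h1 _ _ _), if_neg (h1 _ _ _), add_zero]
  · simp

theorem rr_sharp (G : Multigraph) (hG : G.Connected) (D : G.V → ℤ) :
    G.rankSharp D - G.rankSharp (G.canonical - D) = degree D - G.genus + 1 := by
  have key := rr_loopless G.hat (hat_loopless _) ⟨Sum.inl hG.1.some⟩
    (hat_connected _ hG) (G.subdivMap G.hatn D) (G.subdivMap G.hatn G.canonical) ?_
  · have e1 : G.subdivMap G.hatn G.canonical - G.subdivMap G.hatn D =
        G.subdivMap G.hatn (G.canonical - D) := by
      funext x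
      rcases x with x | x
      · rfl
      · change (0 : ℤ) - 0 = 0
        rfl
    have e2 : degree (α := G.hat.V) (G.subdivMap G.hatn D) = degree D := by
      change ∑ x : G.V ⊕ (Σ e : G.E, Fin (G.hatn e)), Sum.elim D 0 x = _
      rw [Fintype.sum_sum_type]
      simp [degree]
    rw [e2, hat_genus] at key
    rw [← key]
    have e3 : G.rankSharp (G.canonical - D) =
        G.hat.rank (G.subdivMap G.hatn G.canonical - G.subdivMap G.hatn D) := by
      rw [e1]; rfl
    rw [e3]
    rfl
  · rintro (v | x)
    · rw [hat_valency_inl]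
      rfl
    · rw [hat_valency_inr]
      rfl

end Multigraph

open Multigraph in
/-- Riemann–Roch for weighted graphs.  For a connected weighted
graph `(G, ω)` of genus `g = b₁(G) + Σ_v ω(v)` and any divisor `D`,
`r_{(G,ω)}(D) - r_{(G,ω)}(K_{(G,ω)} - D) = deg D - g + 1`. -/
theorem riemann_roch_weighted_graph (G : Multigraph) (hG : G.Connected)
    (w : G.V → ℕ) (D : G.V → ℤ) :
    G.rankW w D - G.rankW w (G.canonicalW w - D)
      = Multigraph.degree D - G.genusW w + 1 := by
  have hv : (G.virt w).Connected := by
    refine ⟨hG.1, fun u v => ?_⟩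
    have huv : Relation.ReflTransGen G.Adj u v := hG.2 u v
    induction huv with
    | refl => exact .refl
    | tail _ h ih =>
      obtain ⟨e, he⟩ := h
      exact ih.tail ⟨Sum.inl e, he⟩
  have hval : ∀ v : G.V, ((G.virt w).valency v : ℤ) = G.valency v + 2 * w v := by
    intro v
    have h1 : (G.virt w).valency v = (∑ e : G.E, ((if (G.ends e).1 = v then 1 else 0) +
        (if (G.ends e).2 = v then 1 else 0))) + ∑ p : (Σ v : G.V, Fin (w v)),
        ((if p.1 = v then 1 else 0) + (if p.1 = v then 1 else 0)) :=
      Fintype.sum_sum_type _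
    rw [h1, Fintype.sum_sigma]
    simp [valency]
    rw [Finset.sum_eq_single v]
    · simp; ring
    · intro b _ hb
      simp [hb]
    · simp
  have hgen : (G.virt w).genus = G.genusW w := by
    have h1 : Fintype.card (G.virt w).E = Fintype.card G.E + ∑ v, w v := by
      change Fintype.card (G.E ⊕ (Σ v : G.V, Fin (w v))) = _
      simp
    have h2 : Fintype.card (G.virt w).V = Fintype.card G.V := rfl
    unfold genusW genus
    rw [h1, h2]
    push_cast
    ring
  have hcan : (G.virt w).canonical = G.canonicalW w := by
    funext v
    have := hval v
    unfold canonical canonicalW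
    omega
  have key := rr_sharp (G.virt w) hv D
  rw [hgen, hcan] at key
  exact key
end

section
/- Let G be a connected graph, possibly with loops, and let r_G(D) denote the rank of D computed disregarding the loops of G (i.e., the Baker–Norine rank on the graph obtained from G by removing all loop-edges). Then for every D ∈ Div(G): r_G(D) ≥ r#_G(D). -/
namespace Multigraph

lemma inter_eq_sum (G : Multigraph) (v w : G.V) :
    G.inter v w = ∑ e : G.E,
      ((if (G.ends e).1 = v then (1 : ℤ) else 0) - (if (G.ends e).2 = v then 1 else 0)) *
      ((if (G.ends e).2 = w then (1 : ℤ) else 0) - (if (G.ends e).1 = w then 1 else 0)) := by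
  unfold inter valency numLoops numEdges
  split_ifs with h
  · subst h
    rw [Finset.card_filter]
    push_cast
    rw [Finset.mul_sum, ← Finset.sum_neg_distrib, ← Finset.sum_add_distrib]
    refine Finset.sum_congr rfl fun e _ => ?_
    by_cases h1 : (G.ends e).1 = v <;> by_cases h2 : (G.ends e).2 = v <;>
      simp [Prod.ext_iff, h1, h2]
  · rw [Finset.card_filter]
    push_cast
    refine Finset.sum_congr rfl fun e _ => ?_
    by_cases h1 : (G.ends e).1 = v <;> by_cases h2 : (G.ends e).2 = v <;>
      by_cases h3 : (G.ends e).1 = w <;> by_cases h4 : (G.ends e).2 = w <;>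
      simp [Prod.ext_iff, h1, h2, h3, h4] <;> grind

/-- push-forward of divisors along a map of vertices -/
def push {α β : Type} [Fintype α] [DecidableEq β] (p : α → β) : (α → ℤ) →+ (β → ℤ) where
  toFun D := fun w => ∑ x, D x * (if p x = w then 1 else 0)
  map_zero' := by ext; simp
  map_add' a b := by ext; simp only [Pi.add_apply, add_mul, Finset.sum_add_distrib]

lemma push_apply {α β : Type} [Fintype α] [DecidableEq β] (p : α → β) (D : α → ℤ) (w : β) :
    push p D w = ∑ x, D x * (if p x = w then 1 else 0) := rfl

lemma push_T (G : Multigraph) {β : Type} [DecidableEq β] (p : G.V → β) (v : G.V) (w : β) :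
    push p (G.T v) w = ∑ e : G.E,
      ((if (G.ends e).1 = v then (1 : ℤ) else 0) - (if (G.ends e).2 = v then 1 else 0)) *
      ((if p (G.ends e).2 = w then (1 : ℤ) else 0) - (if p (G.ends e).1 = w then 1 else 0)) := by
  simp only [push_apply, T, inter_eq_sum, Finset.sum_mul]
  rw [Finset.sum_comm]
  refine Finset.sum_congr rfl fun e _ => ?_
  simp only [mul_assoc, ← Finset.mul_sum]
  congr 1
  simp only [sub_mul, Finset.sum_sub_distrib, ite_mul, one_mul, zero_mul]
  rw [Finset.sum_ite_eq, Finset.sum_ite_eq]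
  simp only [Finset.mem_univ, if_true]

lemma degree_prin (G : Multigraph) (D : G.V → ℤ) (h : D ∈ G.Prin) : degree D = 0 := by
  have key : G.Prin ≤ (push (fun _ : G.V => ())).ker := by
    unfold Prin
    rw [AddSubgroup.closure_le]
    rintro _ ⟨v, rfl⟩
    simp only [SetLike.mem_coe, AddMonoidHom.mem_ker]
    ext w
    rw [push_T]
    simp
  have := congrFun (AddMonoidHom.mem_ker.1 (key h)) ()
  simpa [push_apply, degree] using this

/-- projection of vertices -/
def proj (G : Multigraph) (n : G.E → ℕ) : (G.subdivide n).V → G.removeLoops.V :=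
  Sum.elim id (fun x => (G.ends x.1).1)

/-- inclusion of vertices -/
def incl (G : Multigraph) (n : G.E → ℕ) : G.removeLoops.V → (G.subdivide n).V := Sum.inl

lemma incl_inj (G : Multigraph) (n : G.E → ℕ) : Function.Injective (G.incl n) :=
  Sum.inl_injective

lemma proj_incl (G : Multigraph) (n : G.E → ℕ) (v) : G.proj n (G.incl n v) = v := rfl

/-- inclusion of edges -/
def inclE (G : Multigraph) (n : G.E → ℕ) : G.removeLoops.E → (G.subdivide n).E :=
  fun e => ⟨e.1, 0⟩

lemma inclE_inj (G : Multigraph) (n : G.E → ℕ) : Function.Injective (G.inclE n) := by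
  intro a b h
  exact Subtype.ext (congrArg (fun x : (Σ e : G.E, Fin (n e + 1)) => x.1) h)

lemma ends_inclE (G : Multigraph) (n : G.E → ℕ)
    (hn : ∀ e, n e = 0 ∨ (G.ends e).1 = (G.ends e).2) (e : G.removeLoops.E) :
    (G.subdivide n).ends (G.inclE n e) =
      (G.incl n (G.removeLoops.ends e).1, G.incl n (G.removeLoops.ends e).2) := by
  have h0 : n e.1 = 0 := (hn e.1).resolve_right e.2
  refine Prod.ext ?_ ?_
  · rfl
  · exact dif_pos h0.symm

lemma proj_ends (G : Multigraph) (n : G.E → ℕ)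
    (hn : ∀ e, n e = 0 ∨ (G.ends e).1 = (G.ends e).2) (x : (G.subdivide n).E)
    (hx : x ∉ Set.range (G.inclE n)) :
    G.proj n ((G.subdivide n).ends x).1 = G.proj n ((G.subdivide n).ends x).2 := by
  obtain ⟨e, i⟩ := x
  by_cases hl : (G.ends e).1 = (G.ends e).2
  · have h1 : G.proj n ((G.subdivide n).ends ⟨e, i⟩).1 = (G.ends e).1 := by
      simp only [subdivide, proj]; split_ifs <;> rfl
    have h2 : G.proj n ((G.subdivide n).ends ⟨e, i⟩).2 = (G.ends e).1 := by
      simp only [subdivide, proj]; split_ifs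
      · exact hl.symm
      · rfl
    exact h1.trans h2.symm
  · exfalso
    have h0 : n e = 0 := (hn e).resolve_right hl
    have hi : i = 0 := Fin.ext (by have := i.isLt; simp; omega)
    exact hx ⟨⟨e, hl⟩, by rw [hi]; rfl⟩

lemma push_T_subdivide (G : Multigraph) (n : G.E → ℕ)
    (hn : ∀ e, n e = 0 ∨ (G.ends e).1 = (G.ends e).2) (x : (G.subdivide n).V)
    (w : G.removeLoops.V) :
    push (G.proj n) ((G.subdivide n).T x) w = ∑ e : G.removeLoops.E,
      ((if G.incl n (G.removeLoops.ends e).1 = x then (1 : ℤ) else 0)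
        - (if G.incl n (G.removeLoops.ends e).2 = x then 1 else 0)) *
      ((if (G.removeLoops.ends e).2 = w then (1 : ℤ) else 0)
        - (if (G.removeLoops.ends e).1 = w then 1 else 0)) := by
  rw [push_T]
  symm
  refine Fintype.sum_of_injective (G.inclE n) (G.inclE_inj n) _ _ ?_ ?_
  · intro y hy
    rw [proj_ends G n hn y hy, sub_self, mul_zero]
  · intro e
    rw [ends_inclE G n hn]
    simp only [proj_incl]
    rfl

lemma push_prin (G : Multigraph) (n : G.E → ℕ)
    (hn : ∀ e, n e = 0 ∨ (G.ends e).1 = (G.ends e).2) (D : (G.subdivide n).V → ℤ)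
    (h : D ∈ (G.subdivide n).Prin) : push (G.proj n) D ∈ G.removeLoops.Prin := by
  have key : (G.subdivide n).Prin ≤ AddSubgroup.comap (push (G.proj n)) G.removeLoops.Prin := by
    unfold Prin
    rw [AddSubgroup.closure_le]
    rintro _ ⟨x, rfl⟩
    rw [SetLike.mem_coe, AddSubgroup.mem_comap]
    have hx : (∃ v, x = G.incl n v) ∨ ∀ v, G.incl n v ≠ x := by
      by_cases hx : ∃ v, x = G.incl n v
      · exact Or.inl hx
      · exact Or.inr fun v h => hx ⟨v, h.symm⟩
    rcases hx with ⟨v, rfl⟩ | hx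
    · refine AddSubgroup.subset_closure ⟨v, ?_⟩
      funext w
      rw [push_T_subdivide G n hn, T, inter_eq_sum]
      simp only [(G.incl_inj n).eq_iff]
    · convert AddSubgroup.zero_mem _
      funext w
      rw [push_T_subdivide G n hn]
      simp [hx]
  exact key h

/-- extension by zero -/
def ext0 (G : Multigraph) (n : G.E → ℕ) (D : G.removeLoops.V → ℤ) :
    (G.subdivide n).V → ℤ := G.subdivMap n D

lemma push_ext0 (G : Multigraph) (n : G.E → ℕ) (D : G.removeLoops.V → ℤ) :
    push (G.proj n) (G.ext0 n D) = D := by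
  funext w
  rw [push_apply]
  have : ∑ v, D v * (if v = w then 1 else 0) = D w := by simp
  rw [← this]
  symm
  refine Fintype.sum_of_injective (G.incl n) (G.incl_inj n) _ _ ?_ ?_
  · rintro (y | y) hy
    · exact absurd ⟨y, rfl⟩ hy
    · exact zero_mul _
  · intro v
    rfl

lemma degree_ext0 (G : Multigraph) (n : G.E → ℕ) (D : G.removeLoops.V → ℤ) :
    degree (G.ext0 n D) = degree D := by
  unfold degree
  symm
  refine Fintype.sum_of_injective (G.incl n) (G.incl_inj n) _ _ ?_ ?_
  · rintro (y | y) hy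
    · exact absurd ⟨y, rfl⟩ hy
    · rfl
  · intro v
    rfl

lemma rank_bddAbove (G : Multigraph) (v : G.V) (D : G.V → ℤ) :
    BddAbove {r : ℤ | r = -1 ∨ (0 ≤ r ∧ ∀ E : G.V → ℤ, Effective E → degree E = r →
      ∃ F : G.V → ℤ, Effective F ∧ D - E - F ∈ G.Prin)} := by
  refine ⟨max (-1) (degree D), ?_⟩
  rintro r (rfl | ⟨h0, h⟩)
  · exact le_max_left _ _
  · obtain ⟨F, hF, hP⟩ := h (fun w => if w = v then r else 0)
      (fun w => by dsimp only; split_ifs <;> simp [h0]) (by simp [degree])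
    have := G.degree_prin _ hP
    have hF' : 0 ≤ ∑ w, F w := Finset.sum_nonneg fun w _ => hF w
    simp [degree, Finset.sum_sub_distrib] at this
    refine le_max_of_le_right ?_
    unfold degree
    linarith

end Multigraph

open Multigraph in
/-- For a connected graph `G` (possibly with loops),
`r_G(D) ≥ r#_G(D)`, where `r_G` is the rank computed on the graph obtained from `G` by
removing all loop-edges. -/
theorem rank_removeLoops_ge_rankSharp (G : Multigraph) (hG : G.Connected) (D : G.V → ℤ) :
    G.rankSharp D ≤ G.removeLoops.rank D := by
  unfold rankSharp hat rank
  obtain ⟨v⟩ := hG.1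
  refine csSup_le_csSup (rank_bddAbove G.removeLoops v D) ⟨-1, Or.inl rfl⟩ ?_
  rintro r (rfl | ⟨h0, h⟩)
  · exact Or.inl rfl
  refine Or.inr ⟨h0, fun E hE hd => ?_⟩
  set n : G.E → ℕ := fun e => if (G.ends e).1 = (G.ends e).2 then 1 else 0 with hn
  have hn' : ∀ e, n e = 0 ∨ (G.ends e).1 = (G.ends e).2 := by
    intro e
    by_cases hl : (G.ends e).1 = (G.ends e).2
    · exact Or.inr hl
    · left; simp [hn, hl]
  obtain ⟨F, hF, hP⟩ := h (G.ext0 n E)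
    (by rintro (x | x)
        · exact hE x
        · exact le_refl _)
    ((degree_ext0 G n E).trans hd)
  let D' : G.removeLoops.V → ℤ := D
  change G.ext0 n D' - G.ext0 n E - F ∈ (G.subdivide n).Prin at hP
  refine ⟨push (G.proj n) F, fun w => ?_, ?_⟩
  · rw [push_apply]
    refine Finset.sum_nonneg fun x _ => mul_nonneg (hF x) ?_
    split_ifs <;> simp
  · have := push_prin G n hn' _ hP
    rw [map_sub, map_sub, push_ext0 G n D', push_ext0] at this
    exact this
end
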